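/- Let n ≥ 1 and let K be a smooth, strictly convex body in ℝ^{n+1} with positive support function h, and let X(x) = ∇h_K(x). Then n·∫ |X|² dV ≤ ∫ h(x)·tr A(x) dV + n·|∫ X dV|²/(∫ dV), where tr A(x) is the trace of the Hessian endomorphism A(x) (which equals the spherical quantity Δ̄h + n h at x ∈ S^n). -/

import Mathlib

open MeasureTheory Metric Real
open scoped InnerProductSpace ENNReal Topology

noncomputable section

/-- Euclidean space `ℝ^{n+1}`. -/
abbrev Eu (n : ℕ) : Type := EuclideanSpace ℝ (Fin (n + 1))

/-- The unit sphere `S^n ⊆ ℝ^{n+1}` as a subtype. -/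
abbrev Sph (n : ℕ) : Type := Metric.sphere (0 : Eu n) 1

/-- The spherical Lebesgue (surface) measure on `S^n`. -/
def sphMeas (n : ℕ) : Measure (Sph n) := (volume : Measure (Eu n)).toSphere

/-- The support function of a set `K ⊆ ℝ^{n+1}`. -/
def sfn {n : ℕ} (K : Set (Eu n)) (z : Eu n) : ℝ :=
  sSup ((fun y => ⟪z, y⟫_ℝ) '' K)

/-- The Hessian endomorphism `A(x) = D(∇ h_K)(x)`. -/
def hessA {n : ℕ} (K : Set (Eu n)) (x : Eu n) : Eu n →L[ℝ] Eu n :=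
  fderiv ℝ (gradient (sfn K)) x

/-- The rank-one endomorphism `x ⊗ x : v ↦ ⟨v, x⟩ x`. -/
def tens {n : ℕ} (x : Eu n) : Eu n →L[ℝ] Eu n :=
  (innerSL ℝ x).smulRight x

/-- `det (A(x) + x ⊗ x)`, the reciprocal Gauss curvature `1/𝒦` at `x ∈ S^n`. -/
def rK {n : ℕ} (K : Set (Eu n)) (x : Eu n) : ℝ :=
  LinearMap.det ((hessA K x + tens x : Eu n →L[ℝ] Eu n) : Eu n →ₗ[ℝ] Eu n)

/-- `K` is a smooth, strictly convex body with positive support function. -/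
structure IsSmoothConvexBody {n : ℕ} (K : Set (Eu n)) : Prop where
  compact : IsCompact K
  convex : Convex ℝ K
  interior_nonempty : (interior K).Nonempty
  pos : ∀ x : Sph n, 0 < sfn K x
  smooth : ContDiffOn ℝ (⊤ : ℕ∞) (sfn K) {(0 : Eu n)}ᶜ
  posdef : ∀ x : Sph n, ∀ v : Eu n, v ≠ 0 →
    0 < ⟪(hessA K (x : Eu n) + tens (x : Eu n)) v, v⟫_ℝ

/-- The density `h·det(A + x⊗x)` of the measure `dV` with respect to `dθ`. -/
def dens {n : ℕ} (K : Set (Eu n)) (x : Eu n) : ℝ := sfn K x * rK K x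

/-- The centroid-type point `c(K) = (∫ ∇h_K dV)/(∫ dV)`. -/
def cK {n : ℕ} (K : Set (Eu n)) : Eu n :=
  (∫ x : Sph n, dens K x ∂sphMeas n)⁻¹ •
    ∫ x : Sph n, dens K x • gradient (sfn K) x ∂sphMeas n

/-- The support function of the translated body `K - c(K)`. -/
def tsfn {n : ℕ} (K : Set (Eu n)) (x : Eu n) : ℝ := sfn K x - ⟪x, cK K⟫_ℝ

/-!
The inequality is the second-order term of the Prékopa–Leindler inequality. For a direction `e` and
a constant `c`, deform `h² / 2` into `φₜ z = (h (z + t e) - t c)² / 2`. By Prékopa–Leindler, the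
integrals of `e^{-φ*}` for `φ = φₜ` and `φ = φ₋ₜ` have product at most the square of the integral
for `φ = (φₜ + φ₋ₜ) / 2`. The Legendre map `z ↦ h z • ∇h z`, whose Jacobian on the sphere is
`hⁿ⁺¹ det (A + x ⊗ x)`, turns this into a comparison of exponential integrals against one finite
measure. Its expansion to order `t²` bounds the variance of `h (⟪∇h, e⟫ - c)` by the integral of the
second variation of `φₜ`. In polar coordinates the two integrands are homogeneous of degrees `2` and
`0`, and the ratio `n + 1` of the corresponding Gaussian moments is the gain over a plain variance
bound. Taking `c` to be the mean of `⟪∇h, e⟫` and summing over an orthonormal basis gives the trace.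
-/

section PrekopaLeindler

open scoped Pointwise

lemma volume_add_volume_le_volume_add_of_isCompact {A B : Set ℝ} (hA : IsCompact A)
    (hB : IsCompact B) (hA₀ : A.Nonempty) (hB₀ : B.Nonempty) :
    volume A + volume B ≤ volume (A + B) := by
  have ha := hA.sSup_mem hA₀
  have hb := hB.sInf_mem hB₀
  -- `A + min B` and `max A + B` lie in `A + B` and share only the point `max A + min B`.
  have hdisj : volume ((· + -sInf B) ⁻¹' A ∩ (· + -sSup A) ⁻¹' B) = 0 := by
    refine measure_mono_null (t := {sSup A + sInf B}) ?_ (by simp)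
    rintro x ⟨hxA, hxB⟩
    have h₁ : x + -sInf B ≤ sSup A := le_csSup hA.bddAbove hxA
    have h₂ : sInf B ≤ x + -sSup A := csInf_le hB.bddBelow hxB
    exact le_antisymm (by linarith) (by linarith)
  have hmeas : MeasurableSet ((· + -sSup A) ⁻¹' B) :=
    (measurable_add_const _) hB.measurableSet
  rw [← measure_preimage_add_right volume (-sInf B) A,
    ← measure_preimage_add_right volume (-sSup A) B,
    ← measure_union₀ hmeas.nullMeasurableSet hdisj]
  refine measure_mono (Set.union_subset (fun x hx ↦ ?_) fun x hx ↦ ?_)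
  · exact ⟨_, hx, _, hb, by ring⟩
  · exact ⟨_, ha, _, hx, by ring⟩

lemma volume_add_volume_le_volume_add {A B : Set ℝ} (hA : MeasurableSet A)
    (hB : MeasurableSet B) (hA₀ : A.Nonempty) (hB₀ : B.Nonempty) :
    volume A + volume B ≤ volume (A + B) := by
  obtain ⟨a, ha⟩ := hA₀
  obtain ⟨b, hb⟩ := hB₀
  rw [hA.measure_eq_iSup_isCompact, hB.measure_eq_iSup_isCompact]
  simp_rw [iSup_and']
  refine ENNReal.biSup_add_biSup_le' ⟨∅, by simp⟩ ⟨∅, by simp⟩ ?_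
  rintro S ⟨hSA, hS⟩ T ⟨hTB, hT⟩
  calc volume S + volume T ≤ volume (insert a S) + volume (insert b T) := by
        gcongr <;> exact Set.subset_insert _ _
    _ ≤ volume (insert a S + insert b T) :=
        volume_add_volume_le_volume_add_of_isCompact (hS.insert a) (hT.insert b)
          (Set.insert_nonempty _ _) (Set.insert_nonempty _ _)
    _ ≤ volume (A + B) :=
        measure_mono (Set.add_subset_add (Set.insert_subset ha hSA) (Set.insert_subset hb hTB))

lemma ennreal_geom_mean_le_arith_mean2_weighted {s t : ℝ} (hs : 0 < s) (ht : 0 < t)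
    (hst : s + t = 1) (a b : ℝ≥0∞) :
    a ^ s * b ^ t ≤ ENNReal.ofReal s * a + ENNReal.ofReal t * b := by
  have hpq : s⁻¹.HolderConjugate t⁻¹ :=
    Real.holderConjugate_iff.2 ⟨by rw [one_lt_inv₀ hs]; linarith, by simpa using hst⟩
  have := ENNReal.young_inequality (a ^ s) (b ^ t) hpq
  rwa [← ENNReal.rpow_mul, ← ENNReal.rpow_mul, mul_inv_cancel₀ hs.ne', mul_inv_cancel₀ ht.ne',
    ENNReal.rpow_one, ENNReal.rpow_one, ENNReal.ofReal_inv_of_pos hs, ENNReal.ofReal_inv_of_pos ht,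
    div_eq_mul_inv, div_eq_mul_inv, inv_inv, inv_inv, mul_comm a, mul_comm b] at this

lemma lintegral_eq_lintegral_meas_ofReal_lt {α : Type*} [MeasurableSpace α] (μ : Measure α)
    {f : α → ℝ≥0∞} (hf : AEMeasurable f μ) (hf_top : ∀ x, f x ≠ ∞) :
    ∫⁻ x, f x ∂μ = ∫⁻ r in Set.Ioi (0 : ℝ), μ {x | ENNReal.ofReal r < f x} := by
  calc ∫⁻ x, f x ∂μ = ∫⁻ x, ENNReal.ofReal (f x).toReal ∂μ := by
        simp_rw [ENNReal.ofReal_toReal (hf_top _)]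
    _ = ∫⁻ r in Set.Ioi (0 : ℝ), μ {x | r < (f x).toReal} :=
        lintegral_eq_lintegral_meas_lt μ (.of_forall fun _ ↦ ENNReal.toReal_nonneg)
          hf.ennreal_toReal
    _ = _ := setLIntegral_congr_fun measurableSet_Ioi fun r hr ↦ by
        simp_rw [ENNReal.ofReal_lt_iff_lt_toReal (le_of_lt hr) (hf_top _)]

variable {s t : ℝ}

lemma volume_lt_add_volume_lt_le (hs : 0 < s) (ht : 0 < t) (hst : s + t = 1)
    {f g m : ℝ → ℝ≥0∞} (hf : Measurable f) (hg : Measurable g)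
    (h : ∀ a b, f a ^ s * g b ^ t ≤ m (s • a + t • b)) {r : ℝ≥0∞}
    (hfr : ∃ x, r < f x) (hgr : ∃ x, r < g x) :
    ENNReal.ofReal s * volume {x | r < f x} + ENNReal.ofReal t * volume {x | r < g x} ≤
      volume {x | r < m x} := by
  have hvol {c : ℝ} (hc : 0 < c) (S : Set ℝ) : ENNReal.ofReal c * volume S = volume (c • S) := by
    simp [Measure.addHaar_smul, abs_of_pos hc]
  have hsub : s • {x | r < f x} + t • {x | r < g x} ⊆ {x | r < m x} := by
    rintro _ ⟨_, ⟨a, ha, rfl⟩, _, ⟨b, hb, rfl⟩, rfl⟩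
    refine lt_of_lt_of_le ?_ (h a b)
    calc r = r ^ s * r ^ t := by
          rw [← ENNReal.rpow_add_of_nonneg _ _ hs.le ht.le, hst, ENNReal.rpow_one]
      _ < f a ^ s * g b ^ t :=
          ENNReal.mul_lt_mul (ENNReal.rpow_lt_rpow ha hs) (ENNReal.rpow_lt_rpow hb ht)
  rw [hvol hs, hvol ht]
  exact (volume_add_volume_le_volume_add
    ((measurableSet_lt measurable_const hf).const_smul₀ s)
    ((measurableSet_lt measurable_const hg).const_smul₀ t)
    (Set.Nonempty.smul_set hfr) (Set.Nonempty.smul_set hgr)).trans (measure_mono hsub)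

lemma lintegral_add_lintegral_le_of_iSup_eq_one (hs : 0 < s) (ht : 0 < t) (hst : s + t = 1)
    {f g m : ℝ → ℝ≥0∞} (hf : Measurable f) (hg : Measurable g) (hm : Measurable m)
    (hf₁ : ⨆ x, f x = 1) (hg₁ : ⨆ x, g x = 1)
    (h : ∀ a b, f a ^ s * g b ^ t ≤ m (s • a + t • b)) :
    ENNReal.ofReal s * (∫⁻ x, f x) + ENNReal.ofReal t * (∫⁻ x, g x) ≤ ∫⁻ x, m x := by
  have hf_le x : f x ≤ 1 := (le_iSup f x).trans hf₁.le
  have hg_le x : g x ≤ 1 := (le_iSup g x).trans hg₁.le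
  have hne_top {u : ℝ → ℝ≥0∞} (hu : ∀ x, u x ≤ 1) x : u x ≠ ∞ := ((hu x).trans_lt (by simp)).ne
  refine le_trans ?_ (lintegral_mono fun x ↦ min_le_left (m x) 1)
  rw [lintegral_eq_lintegral_meas_ofReal_lt _ hf.aemeasurable (hne_top hf_le),
    lintegral_eq_lintegral_meas_ofReal_lt _ hg.aemeasurable (hne_top hg_le),
    lintegral_eq_lintegral_meas_ofReal_lt _ (hm.min measurable_const).aemeasurable
      (hne_top fun x ↦ min_le_right _ _),
    ← lintegral_const_mul' _ _ (by simp), ← lintegral_const_mul' _ _ (by simp),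
    ← lintegral_add_left']
  swap
  · refine (Antitone.measurable fun r r' hr ↦ ?_).aemeasurable
    gcongr
  refine setLIntegral_mono' measurableSet_Ioi fun r _ ↦ ?_
  rcases lt_or_ge r 1 with hr | hr
  · have hr' : ENNReal.ofReal r < 1 := by simpa using hr
    refine volume_lt_add_volume_lt_le hs ht hst hf hg (fun a b ↦ le_min (h a b) ?_)
      (lt_iSup_iff.1 (hr'.trans_eq hf₁.symm)) (lt_iSup_iff.1 (hr'.trans_eq hg₁.symm))
    exact mul_le_one' (ENNReal.rpow_le_one (hf_le a) hs.le) (ENNReal.rpow_le_one (hg_le b) ht.le)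
  · have hempty {u : ℝ → ℝ≥0∞} (hu : ∀ x, u x ≤ 1) : {x | ENNReal.ofReal r < u x} = ∅ :=
      Set.eq_empty_of_forall_notMem fun x hx ↦
        (lt_of_lt_of_le hx (hu x)).not_ge (by simpa using hr)
    simp [hempty hf_le, hempty hg_le]

lemma prekopa_leindler_real_of_iSup_ne_top (hs : 0 < s) (ht : 0 < t) (hst : s + t = 1)
    {f g m : ℝ → ℝ≥0∞} (hf : Measurable f) (hg : Measurable g) (hm : Measurable m)
    (hf_top : ⨆ x, f x ≠ ∞) (hg_top : ⨆ x, g x ≠ ∞)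
    (h : ∀ a b, f a ^ s * g b ^ t ≤ m (s • a + t • b)) :
    (∫⁻ x, f x) ^ s * (∫⁻ x, g x) ^ t ≤ ∫⁻ x, m x := by
  set A := ⨆ x, f x
  set B := ⨆ x, g x
  rcases eq_or_ne A 0 with hA | hA
  · have : ∀ x, f x = 0 := by simpa using ENNReal.iSup_eq_zero.1 hA
    simp [this, hs]
  rcases eq_or_ne B 0 with hB | hB
  · have : ∀ x, g x = 0 := by simpa using ENNReal.iSup_eq_zero.1 hB
    simp [this, ht]
  have hnorm {u : ℝ → ℝ≥0∞} {U : ℝ≥0∞} (hU : ⨆ x, u x = U) (hU₀ : U ≠ 0) (hU_top : U ≠ ∞) :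
      ⨆ x, U⁻¹ * u x = 1 := by
    rw [← ENNReal.mul_iSup, hU, ENNReal.inv_mul_cancel hU₀ hU_top]
  have hscale (p q : ℝ≥0∞) :
      (A⁻¹ * p) ^ s * (B⁻¹ * q) ^ t = (A ^ s * B ^ t)⁻¹ * (p ^ s * q ^ t) := by
    rw [ENNReal.mul_rpow_of_nonneg _ _ hs.le, ENNReal.mul_rpow_of_nonneg _ _ ht.le,
      ENNReal.inv_rpow, ENNReal.inv_rpow, ENNReal.mul_inv (.inl (by simp [hA, hf_top]))
      (.inl (by simp [hs.le, hf_top]))]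
    ring
  have hAB₀ : A ^ s * B ^ t ≠ 0 := by simp [hA, hB, hf_top, hg_top]
  have hAB_top : A ^ s * B ^ t ≠ ∞ :=
    ENNReal.mul_ne_top (by simp [hs.le, hf_top]) (by simp [ht.le, hg_top])
  refine (ENNReal.mul_le_mul_iff_right (ENNReal.inv_ne_zero.2 hAB_top)
    (ENNReal.inv_ne_top.2 hAB₀)).1 ?_
  rw [← hscale, ← lintegral_const_mul _ hf, ← lintegral_const_mul _ hg, ← lintegral_const_mul _ hm]
  refine (ennreal_geom_mean_le_arith_mean2_weighted hs ht hst _ _).trans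
    (lintegral_add_lintegral_le_of_iSup_eq_one hs ht hst (by fun_prop) (by fun_prop) (by fun_prop)
      (hnorm rfl hA hf_top) (hnorm rfl hB hg_top) fun a b ↦ ?_)
  rw [hscale]
  gcongr
  exact h a b

lemma lintegral_eq_iSup_lintegral_min_natCast {α : Type*} [MeasurableSpace α] (μ : Measure α)
    {f : α → ℝ≥0∞} (hf : Measurable f) : ∫⁻ x, f x ∂μ = ⨆ N : ℕ, ∫⁻ x, min (f x) N ∂μ := by
  rw [← lintegral_iSup (fun N ↦ hf.min measurable_const)
    fun i j hij x ↦ min_le_min le_rfl (Nat.cast_le.2 hij)]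
  congr with x
  rw [← inf_iSup_eq, ENNReal.iSup_natCast, inf_top_eq]

lemma prekopa_leindler_real (hs : 0 < s) (ht : 0 < t) (hst : s + t = 1)
    {f g m : ℝ → ℝ≥0∞} (hf : Measurable f) (hg : Measurable g) (hm : Measurable m)
    (h : ∀ a b, f a ^ s * g b ^ t ≤ m (s • a + t • b)) :
    (∫⁻ x, f x) ^ s * (∫⁻ x, g x) ^ t ≤ ∫⁻ x, m x := by
  have hrpow {r : ℝ} (hr : 0 < r) (u : ℕ → ℝ≥0∞) : (⨆ N, u N) ^ r = ⨆ N, u N ^ r :=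
    (ENNReal.orderIsoRpow r hr).map_iSup u
  have htrunc (u : ℝ → ℝ≥0∞) (N : ℕ) : ⨆ x, min (u x) N ≠ ∞ :=
    ne_top_of_le_ne_top (ENNReal.natCast_ne_top N) (iSup_le fun x ↦ min_le_right _ _)
  rw [lintegral_eq_iSup_lintegral_min_natCast _ hf, lintegral_eq_iSup_lintegral_min_natCast _ hg,
    hrpow hs, hrpow ht]
  simp only [ENNReal.iSup_mul, ENNReal.mul_iSup, iSup_le_iff]
  intro j i
  refine prekopa_leindler_real_of_iSup_ne_top hs ht hst (by fun_prop) (by fun_prop) hm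
    (htrunc f i) (htrunc g j) fun a b ↦ le_trans ?_ (h a b)
  gcongr <;> exact min_le_left _ _

lemma lintegral_fin_succ {k : ℕ} {f : (Fin (k + 1) → ℝ) → ℝ≥0∞} (hf : Measurable f) :
    ∫⁻ x, f x = ∫⁻ r : ℝ, ∫⁻ y : Fin k → ℝ, f (Fin.cons r y) := by
  have he := (volume_preserving_piFinSuccAbove (fun _ : Fin (k + 1) ↦ ℝ) 0).symm
  rw [← he.lintegral_comp hf, Measure.volume_eq_prod,
    lintegral_prod (fun p ↦ f _) (hf.comp he.measurable).aemeasurable]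
  simp [MeasurableEquiv.piFinSuccAbove_symm_apply, Fin.consEquiv]

lemma prekopa_leindler_pi (hs : 0 < s) (ht : 0 < t) (hst : s + t = 1) (k : ℕ)
    {f g m : (Fin k → ℝ) → ℝ≥0∞} (hf : Measurable f) (hg : Measurable g) (hm : Measurable m)
    (h : ∀ a b, f a ^ s * g b ^ t ≤ m (s • a + t • b)) :
    (∫⁻ x, f x) ^ s * (∫⁻ x, g x) ^ t ≤ ∫⁻ x, m x := by
  induction k with
  | zero =>
    simpa [lintegral_unique, volume_pi, Measure.pi_univ, Unique.eq_default] using h default default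
  | succ k ih =>
    have hcons : Measurable fun p : ℝ × (Fin k → ℝ) ↦ (Fin.cons p.1 p.2 : Fin (k + 1) → ℝ) := by
      simpa [MeasurableEquiv.piFinSuccAbove_symm_apply] using!
        (MeasurableEquiv.piFinSuccAbove (fun _ : Fin (k + 1) ↦ ℝ) 0).symm.measurable
    have hcons_right (r : ℝ) : Measurable fun y : Fin k → ℝ ↦ (Fin.cons r y : Fin (k + 1) → ℝ) :=
      hcons.comp (measurable_const.prodMk measurable_id)
    rw [lintegral_fin_succ hf, lintegral_fin_succ hg, lintegral_fin_succ hm]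
    refine prekopa_leindler_real hs ht hst (hf.comp hcons).lintegral_prod_right'
      (hg.comp hcons).lintegral_prod_right' (hm.comp hcons).lintegral_prod_right' fun p q ↦ ?_
    refine ih (hf.comp (hcons_right p)) (hg.comp (hcons_right q)) (hm.comp (hcons_right _))
      fun a b ↦ ?_
    convert h (Fin.cons p a) (Fin.cons q b) using 2
    ext i
    cases i using Fin.cases <;> simp

theorem prekopa_leindler {E : Type*} [NormedAddCommGroup E] [InnerProductSpace ℝ E]
    [FiniteDimensional ℝ E] [MeasurableSpace E] [BorelSpace E]
    (hs : 0 < s) (ht : 0 < t) (hst : s + t = 1)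
    {f g m : E → ℝ≥0∞} (hf : Measurable f) (hg : Measurable g) (hm : Measurable m)
    (h : ∀ a b, f a ^ s * g b ^ t ≤ m (s • a + t • b)) :
    (∫⁻ x, f x) ^ s * (∫⁻ x, g x) ^ t ≤ ∫⁻ x, m x := by
  have hp := (stdOrthonormalBasis ℝ E).measurePreserving_repr_symm.comp
    (PiLp.volume_preserving_toLp _)
  rw [← hp.lintegral_comp hf, ← hp.lintegral_comp hg, ← hp.lintegral_comp hm]
  refine prekopa_leindler_pi hs ht hst _ (hf.comp hp.measurable) (hg.comp hp.measurable)
    (hm.comp hp.measurable) fun a b ↦ ?_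
  simpa using h _ _

end PrekopaLeindler

section VarianceInequality

open Filter

lemma one_add_add_sq_add_cube_le_exp (x : ℝ) : 1 + x + x ^ 2 / 2 + x ^ 3 / 6 ≤ exp x := by
  rcases le_total 0 x with hx | hx
  · simpa [Finset.sum_range_succ, Nat.factorial] using Real.sum_le_exp_of_nonneg hx 4
  have hderiv (y : ℝ) : HasDerivAt (fun y ↦ exp (-y) * (1 + y + y ^ 2 / 2 + y ^ 3 / 6))
      (exp (-y) * -(y ^ 3 / 6)) y := by
    have hexp : HasDerivAt (fun y ↦ exp (-y)) (-exp (-y)) y := by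
      simpa using (hasDerivAt_neg y).exp
    have hpoly := (((hasDerivAt_id y).const_add 1).add ((hasDerivAt_pow 2 y).div_const 2)).add
      ((hasDerivAt_pow 3 y).div_const 6)
    refine (hexp.mul hpoly).congr_deriv ?_
    simp only [id, Pi.add_apply]
    push_cast
    ring
  have hmono := monotoneOn_of_deriv_nonneg (convex_Iic (0 : ℝ))
    (fun y _ ↦ (hderiv y).continuousAt.continuousWithinAt)
    (fun y _ ↦ (hderiv y).differentiableAt.differentiableWithinAt) fun y hy ↦ by
      rw [(hderiv y).deriv]
      have : y ^ 3 ≤ 0 := Odd.pow_nonpos (by decide) (by simpa using interior_subset hy)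
      exact mul_nonneg (exp_pos _).le (by linarith)
  have := hmono (Set.mem_Iic.2 hx) (Set.mem_Iic.2 le_rfl) hx
  simp only [neg_zero, exp_zero] at this
  rw [exp_neg, inv_mul_le_iff₀ (exp_pos x)] at this
  simpa using this

variable {α : Type*} [MeasurableSpace α] {μ : Measure α}

lemma ofReal_integral_le_lintegral_ofReal (f : α → ℝ) :
    ENNReal.ofReal (∫ x, f x ∂μ) ≤ ∫⁻ x, ENNReal.ofReal (f x) ∂μ := by
  by_cases hf : Integrable f μ
  · rw [integral_eq_lintegral_pos_part_sub_lintegral_neg_part hf]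
    exact ENNReal.ofReal_le_of_le_toReal (sub_le_self _ ENNReal.toReal_nonneg)
  · simp [integral_undef hf]

lemma le_of_tendsto_of_mul_le_sq {M a b r : ℝ} {R : ℝ → ℝ} (hM : 0 < M)
    (hR : Tendsto (fun t ↦ (R t - M) / t ^ 2) (𝓝[>] 0) (𝓝 r))
    (h : ∀ᶠ t in 𝓝[>] 0,
      (M + t ^ 2 * a + t ^ 3 * b) * (M + t ^ 2 * a - t ^ 3 * b) ≤ R t ^ 2) : a ≤ r := by
  have ht : Tendsto (fun t : ℝ ↦ t) (𝓝[>] 0) (𝓝 0) := nhdsWithin_le_nhds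
  have hleft : Tendsto (fun t : ℝ ↦ 2 * M * a + t ^ 2 * a ^ 2 - t ^ 4 * b ^ 2) (𝓝[>] 0)
      (𝓝 (2 * M * a)) := by
    simpa using (((ht.pow 2).mul_const (a ^ 2)).const_add (2 * M * a)).sub
      ((ht.pow 4).mul_const (b ^ 2))
  have hright : Tendsto (fun t ↦ (R t - M) / t ^ 2 * (2 * M + t ^ 2 * ((R t - M) / t ^ 2)))
      (𝓝[>] 0) (𝓝 (r * (2 * M))) := by
    simpa using hR.mul (((ht.pow 2).mul hR).const_add (2 * M))
  have hle : 2 * M * a ≤ r * (2 * M) := by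
    refine le_of_tendsto_of_tendsto hleft hright ?_
    filter_upwards [h, self_mem_nhdsWithin] with t h (ht : 0 < t)
    have ht₂ : 0 < t ^ 2 := pow_pos ht 2
    have hRt : R t = M + t ^ 2 * ((R t - M) / t ^ 2) := by field_simp; ring
    generalize (R t - M) / t ^ 2 = ρ at hRt ⊢
    refine le_of_mul_le_mul_left ?_ ht₂
    rw [hRt] at h
    linarith
  nlinarith

variable [IsFiniteMeasure μ] {u : ℝ → α → ℝ} {q : α → ℝ} {C : ℝ}

lemma tendsto_integral_exp_sub_div_sq (hu : ∀ t, AEStronglyMeasurable (u t) μ)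
    (hbound : ∀ᶠ t in 𝓝[>] 0, ∀ᵐ x ∂μ, |u t x| ≤ C * t ^ 2)
    (hlim : ∀ᵐ x ∂μ, Tendsto (fun t ↦ u t x / t ^ 2) (𝓝[>] 0) (𝓝 (q x))) :
    Tendsto (fun t ↦ ∫ x, (exp (u t x) - 1) / t ^ 2 ∂μ) (𝓝[>] 0) (𝓝 (∫ x, q x ∂μ)) := by
  have ht : Tendsto (fun t : ℝ ↦ t ^ 2) (𝓝[>] 0) (𝓝 0) :=
    tendsto_nhdsWithin_of_tendsto_nhds (by simpa using (continuous_pow 2).tendsto (0 : ℝ))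
  have hsmall : ∀ᶠ t : ℝ in 𝓝[>] 0, C * t ^ 2 ≤ 1 :=
    ((ht.const_mul C).eventually_lt_const (by simp : C * 0 < 1)).mono fun _ ↦ le_of_lt
  refine tendsto_integral_filter_of_dominated_convergence (fun _ ↦ 2 * C)
    (.of_forall fun t ↦ ?_) ?_ (integrable_const _) ?_
  · have : Continuous fun s : ℝ ↦ (exp s - 1) / t ^ 2 := by fun_prop
    exact this.comp_aestronglyMeasurable (hu t)
  · filter_upwards [hbound, hsmall, self_mem_nhdsWithin] with t hbound hsmall (ht : 0 < t)
    filter_upwards [hbound] with x hx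
    rw [norm_div, norm_of_nonneg (by positivity : 0 ≤ t ^ 2), div_le_iff₀ (by positivity)]
    exact (abs_exp_sub_one_le (hx.trans hsmall)).trans (by linarith)
  · filter_upwards [hlim] with x hx
    -- `dslope exp 0 s` is `(exp s - 1) / s`, continuously extended by `1` at `s = 0`.
    have hu₀ : Tendsto (fun t ↦ u t x) (𝓝[>] 0) (𝓝 0) := by
      have := ht.mul hx
      rw [zero_mul] at this
      refine this.congr' ?_
      filter_upwards [self_mem_nhdsWithin] with t (ht : 0 < t)
      field_simp
    have hslope : Tendsto (fun t ↦ dslope exp 0 (u t x)) (𝓝[>] 0) (𝓝 1) := by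
      have := (continuousAt_dslope_same.2 differentiable_exp.differentiableAt).tendsto.comp hu₀
      simpa [Function.comp_def] using this
    have := hslope.mul hx
    rw [one_mul] at this
    refine this.congr fun t ↦ ?_
    rw [← exp_zero, ← sub_smul_dslope exp 0 (u t x), sub_zero, smul_eq_mul]
    ring

lemma integrable_exp_of_ae_abs_le {v : α → ℝ} (hv : AEStronglyMeasurable v μ)
    (hC : ∀ᵐ x ∂μ, |v x| ≤ C) : Integrable (fun x ↦ exp (v x)) μ :=
  .of_bound (continuous_exp.comp_aestronglyMeasurable hv) (exp C) <| hC.mono fun x hx ↦ by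
    rw [norm_of_nonneg (exp_pos _).le]
    exact exp_le_exp.2 ((le_abs_self _).trans hx)

lemma ofReal_cubic_le_lintegral_exp {f : α → ℝ} (hf : Integrable f μ)
    (hf₂ : Integrable (fun x ↦ f x ^ 2) μ) (hf₃ : Integrable (fun x ↦ f x ^ 3) μ)
    (hf₀ : ∫ x, f x ∂μ = 0) (t : ℝ) :
    ENNReal.ofReal (μ.real Set.univ + t ^ 2 * ((∫ x, f x ^ 2 ∂μ) / 2) +
        t ^ 3 * ((∫ x, f x ^ 3 ∂μ) / 6)) ≤
      ∫⁻ x, ENNReal.ofReal (exp (t * f x)) ∂μ := by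
  have hint : ∫ x, (1 + t * f x + t ^ 2 / 2 * f x ^ 2 + t ^ 3 / 6 * f x ^ 3) ∂μ =
      μ.real Set.univ + t ^ 2 * ((∫ x, f x ^ 2 ∂μ) / 2) + t ^ 3 * ((∫ x, f x ^ 3 ∂μ) / 6) := by
    have h₁ : Integrable (fun x ↦ 1 + t * f x) μ := (integrable_const 1).add (hf.const_mul t)
    have h₂ : Integrable (fun x ↦ 1 + t * f x + t ^ 2 / 2 * f x ^ 2) μ :=
      h₁.add (hf₂.const_mul _)
    calc _ = (∫ _, (1 : ℝ) ∂μ) + ∫ x, t * f x ∂μ + ∫ x, t ^ 2 / 2 * f x ^ 2 ∂μ +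
          ∫ x, t ^ 3 / 6 * f x ^ 3 ∂μ := by
          rw [← integral_add (integrable_const _) (hf.const_mul t),
            ← integral_add h₁ (hf₂.const_mul _), ← integral_add h₂ (hf₃.const_mul _)]
      _ = _ := by
          simp only [integral_const_mul, hf₀, integral_const, smul_eq_mul]
          ring
  rw [← hint]
  refine (ofReal_integral_le_lintegral_ofReal _).trans (lintegral_mono fun x ↦ ?_)
  refine ENNReal.ofReal_le_ofReal (le_of_eq_of_le ?_ (one_add_add_sq_add_cube_le_exp (t * f x)))
  ring

theorem integral_sq_le_of_lintegral_exp_mul_le {f : α → ℝ} (hf : Integrable f μ)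
    (hf₂ : Integrable (fun x ↦ f x ^ 2) μ) (hf₃ : Integrable (fun x ↦ f x ^ 3) μ)
    (hf₀ : ∫ x, f x ∂μ = 0) (hu : ∀ t, AEStronglyMeasurable (u t) μ)
    (hbound : ∀ᶠ t in 𝓝[>] 0, ∀ᵐ x ∂μ, |u t x| ≤ C * t ^ 2)
    (hlim : ∀ᵐ x ∂μ, Tendsto (fun t ↦ u t x / t ^ 2) (𝓝[>] 0) (𝓝 (q x)))
    (hexp : ∀ t, (∫⁻ x, ENNReal.ofReal (exp (t * f x)) ∂μ) *
        ∫⁻ x, ENNReal.ofReal (exp (-t * f x)) ∂μ ≤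
      (∫⁻ x, ENNReal.ofReal (exp (u t x)) ∂μ) ^ 2) :
    (∫ x, f x ^ 2 ∂μ) / 2 ≤ ∫ x, q x ∂μ := by
  rcases eq_zero_or_neZero μ with rfl | _
  · simp
  set M := μ.real Set.univ
  set b := (∫ x, f x ^ 3 ∂μ) / 6
  have hM : 0 < M := measureReal_univ_pos
  have hint : ∀ᶠ t in 𝓝[>] 0, Integrable (fun x ↦ exp (u t x)) μ :=
    hbound.mono fun t ↦ integrable_exp_of_ae_abs_le (hu t)
  refine le_of_tendsto_of_mul_le_sq (b := b) (R := fun t ↦ ∫ x, exp (u t x) ∂μ) hM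
    ((tendsto_integral_exp_sub_div_sq hu hbound hlim).congr' ?_) ?_
  · filter_upwards [hint] with t hint
    rw [integral_div, integral_sub hint (integrable_const 1)]
    simp [M]
  set P : ℝ → ℝ := fun t ↦ M + t ^ 2 * ((∫ x, f x ^ 2 ∂μ) / 2) + t ^ 3 * b
  have hP : ∀ᶠ t in 𝓝[>] 0, 0 < P t := by
    have : ContinuousAt P 0 := by fun_prop
    exact nhdsWithin_le_nhds (this.eventually_const_lt (by simpa [P] using hM))
  filter_upwards [hint, hP] with t hint hP
  have hR : 0 ≤ ∫ x, exp (u t x) ∂μ := integral_nonneg fun _ ↦ (exp_pos _).le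
  have hP_neg : M + t ^ 2 * ((∫ x, f x ^ 2 ∂μ) / 2) - t ^ 3 * b = P (-t) := by ring
  rw [hP_neg, ← ENNReal.ofReal_le_ofReal_iff (sq_nonneg _), ENNReal.ofReal_mul hP.le,
    ENNReal.ofReal_pow hR, ofReal_integral_eq_lintegral_ofReal hint
      (.of_forall fun _ ↦ (exp_pos _).le)]
  exact (mul_le_mul' (ofReal_cubic_le_lintegral_exp hf hf₂ hf₃ hf₀ t)
    (ofReal_cubic_le_lintegral_exp hf hf₂ hf₃ hf₀ (-t))).trans (hexp t)

end VarianceInequality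

section SecondDifference

open Filter

lemma hasDerivAt_add_smul_const {E : Type*} [NormedAddCommGroup E] [NormedSpace ℝ E] (z e : E)
    (s : ℝ) : HasDerivAt (fun s : ℝ ↦ z + s • e) e s := by
  simpa using ((hasDerivAt_id s).smul_const e).const_add z

variable {γ γ' : ℝ → ℝ}

lemma hasDerivAt_second_difference {s : ℝ} (h : HasDerivAt γ (γ' s) s)
    (h_neg : HasDerivAt γ (γ' (-s)) (-s)) :
    HasDerivAt (fun t ↦ γ t + γ (-t) - 2 * γ 0) (γ' s - γ' (-s)) s := by
  have := (h_neg.comp s (hasDerivAt_neg s)).congr_deriv (mul_neg_one _)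
  exact (h.add this).sub_const _

lemma tendsto_second_difference_div_sq {κ : ℝ} (hγ : ∀ᶠ s in 𝓝 0, HasDerivAt γ (γ' s) s)
    (hγ' : HasDerivAt γ' κ 0) :
    Tendsto (fun t ↦ (γ t + γ (-t) - 2 * γ 0) / t ^ 2) (𝓝[>] 0) (𝓝 κ) := by
  have hneg : Tendsto (fun s : ℝ ↦ -s) (𝓝 0) (𝓝 0) := by simpa using tendsto_neg (0 : ℝ)
  have hderiv : ∀ᶠ s in 𝓝 0,
      HasDerivAt (fun t ↦ γ t + γ (-t) - 2 * γ 0) (γ' s - γ' (-s)) s := by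
    filter_upwards [hγ, hneg.eventually hγ] with s h h_neg
    exact hasDerivAt_second_difference h h_neg
  have hslope : Tendsto (fun s ↦ (γ' s - γ' (-s)) / (2 * s)) (𝓝[>] 0) (𝓝 κ) := by
    have hγ'_neg : HasDerivAt (fun s ↦ γ' (-s)) (-κ) 0 := by
      rw [← neg_zero] at hγ'
      exact (hγ'.comp (0 : ℝ) (hasDerivAt_neg 0)).congr_deriv (mul_neg_one κ)
    have := (hγ'.sub hγ'_neg).tendsto_slope_zero_right.div_const 2
    rw [sub_neg_eq_add, add_self_div_two] at this
    refine this.congr fun s ↦ ?_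
    simp only [zero_add, Pi.sub_apply, neg_zero, sub_self, sub_zero, smul_eq_mul]
    ring
  refine HasDerivAt.lhopital_zero_nhdsGT (g' := fun s ↦ 2 * s) (nhdsWithin_le_nhds hderiv)
    (.of_forall fun s ↦ by simpa using hasDerivAt_pow 2 s) ?_ ?_ ?_ hslope
  · filter_upwards [self_mem_nhdsWithin] with s (hs : 0 < s)
    positivity
  · have := hderiv.self_of_nhds.continuousAt.tendsto
    have h0 : γ 0 + γ (-0) - 2 * γ 0 = 0 := by rw [neg_zero]; ring
    rw [h0] at this
    exact tendsto_nhdsWithin_of_tendsto_nhds this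
  · exact tendsto_nhdsWithin_of_tendsto_nhds (by simpa using (continuous_pow 2).tendsto (0 : ℝ))

lemma abs_second_difference_le {L : ℝ} (hγ : ∀ s, HasDerivAt γ (γ' s) s)
    (hL : ∀ s s', |γ' s - γ' s'| ≤ L * |s - s'|) {t : ℝ} (ht : 0 ≤ t) :
    |γ t + γ (-t) - 2 * γ 0| ≤ 2 * L * t ^ 2 := by
  have hL₀ : 0 ≤ L := by simpa using (abs_nonneg _).trans (hL 1 0)
  have hbound : ∀ s ∈ Set.Ico 0 t, ‖γ' s - γ' (-s)‖ ≤ 2 * L * t := fun s hs ↦ by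
    refine (hL s (-s)).trans ?_
    rw [sub_neg_eq_add, abs_of_nonneg (by linarith [hs.1])]
    nlinarith [hs.2]
  have := norm_image_sub_le_of_norm_deriv_le_segment'
    (fun s _ ↦ (hasDerivAt_second_difference (hγ s) (hγ (-s))).hasDerivWithinAt) hbound t
    ⟨ht, le_rfl⟩
  have h0 : γ 0 + γ (-0) - 2 * γ 0 = 0 := by rw [neg_zero]; ring
  rw [h0, sub_zero, sub_zero, norm_eq_abs] at this
  exact this.trans_eq (by ring)

end SecondDifference

section GaussianMoments

/-- The moments `∫₀^∞ r ^ m e^{-r²/2} dr` of the half-line Gaussian, which appear when a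
homogeneous function is integrated against a Gaussian weight in polar coordinates. -/
def halfGaussianMoment (m : ℕ) : ℝ := ∫ r in Set.Ioi (0 : ℝ), r ^ m * exp (-(r ^ 2 / 2))

lemma halfGaussianMoment_eq (m : ℕ) : halfGaussianMoment m =
    (1 / 2 : ℝ) ^ (-((m : ℝ) + 1) / 2) * (1 / 2) * Gamma (((m : ℝ) + 1) / 2) := by
  rw [← integral_rpow_mul_exp_neg_mul_rpow two_pos (neg_one_lt_zero.trans_le m.cast_nonneg)
    one_half_pos, halfGaussianMoment]
  refine setIntegral_congr_fun measurableSet_Ioi fun r _ ↦ ?_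
  simp only [rpow_natCast, rpow_two]
  ring_nf

lemma halfGaussianMoment_pos (m : ℕ) : 0 < halfGaussianMoment m := by
  rw [halfGaussianMoment_eq]
  have : 0 < Gamma (((m : ℝ) + 1) / 2) := Gamma_pos_of_pos (by positivity)
  positivity

lemma halfGaussianMoment_add_two (m : ℕ) :
    halfGaussianMoment (m + 2) = (m + 1) * halfGaussianMoment m := by
  have h₁ : (((m + 2 : ℕ) : ℝ) + 1) / 2 = ((m : ℝ) + 1) / 2 + 1 := by push_cast; ring
  have h₂ : -(((m + 2 : ℕ) : ℝ) + 1) / 2 = -((m : ℝ) + 1) / 2 + (-1) := by push_cast; ring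
  rw [halfGaussianMoment_eq, halfGaussianMoment_eq, h₁, h₂, Gamma_add_one (by positivity),
    rpow_add (by norm_num), rpow_neg_one]
  ring

lemma integral_pow_mul_exp_neg_mul_sq (m : ℕ) {a : ℝ} (ha : 0 < a) :
    ∫ r in Set.Ioi (0 : ℝ), r ^ m * exp (-((r * a) ^ 2 / 2)) =
      halfGaussianMoment m / a ^ (m + 1) := by
  have hscale := integral_comp_mul_right_Ioi (fun r ↦ r ^ m * exp (-(r ^ 2 / 2))) 0 ha
  simp only [zero_mul, mul_pow _ a m, mul_right_comm _ (a ^ m), integral_mul_const,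
    smul_eq_mul] at hscale
  rw [halfGaussianMoment, eq_div_iff (pow_pos ha _).ne', pow_succ, ← mul_assoc, hscale,
    mul_right_comm, inv_mul_cancel₀ ha.ne', one_mul]

end GaussianMoments

section Polar

variable {E F : Type*} [NormedAddCommGroup E] [NormedSpace ℝ E] [FiniteDimensional ℝ E]
  [MeasurableSpace E] [BorelSpace E] (μ : Measure E) [μ.IsAddHaarMeasure]
  [NormedAddCommGroup F]

lemma integrable_toSphere_of_continuousOn {f : E → F} (hf : ContinuousOn f {0}ᶜ) :
    Integrable (fun x : sphere (0 : E) 1 ↦ f x) μ.toSphere := by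
  have hcont : Continuous fun x : sphere (0 : E) 1 ↦ f x :=
    hf.comp_continuous continuous_subtype_val fun x ↦ ne_zero_of_mem_sphere one_ne_zero x
  exact hcont.integrable_of_hasCompactSupport (.of_compactSpace _)

open Module in
theorem integral_eq_integral_toSphere_integral_Ioi [Nontrivial E] [NormedSpace ℝ F] {f : E → F}
    (hf : Integrable f μ) :
    ∫ z, f z ∂μ = ∫ x : sphere (0 : E) 1,
      (∫ r in Set.Ioi (0 : ℝ), r ^ (finrank ℝ E - 1) • f (r • (x : E))) ∂μ.toSphere := by
  set d := finrank ℝ E - 1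
  have hmp := μ.measurePreserving_homeomorphUnitSphereProd
  have hemb := (homeomorphUnitSphereProd E).measurableEmbedding
  set g : sphere (0 : E) 1 × Set.Ioi (0 : ℝ) → F := fun p ↦ f ((p.2 : ℝ) • (p.1 : E))
  have hcomp (z : ({0}ᶜ : Set E)) : g (homeomorphUnitSphereProd E z) = f z := by
    simp [g, smul_smul, mul_inv_cancel₀ (norm_ne_zero_iff.2 z.2)]
  have hg : Integrable g (μ.toSphere.prod (.volumeIoiPow d)) := by
    rw [← hmp.integrable_comp_emb hemb, show g ∘ _ = f ∘ Subtype.val from funext hcomp,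
      ← integrableOn_iff_comap_subtypeVal (measurableSet_singleton _).compl]
    exact hf.integrableOn
  calc ∫ z, f z ∂μ = ∫ z : ({0}ᶜ : Set E), f z ∂(μ.comap Subtype.val) := by
        rw [integral_subtype_comap (measurableSet_singleton _).compl f, restrict_compl_singleton]
    _ = ∫ p, g p ∂(μ.toSphere.prod (.volumeIoiPow d)) := by
        rw [← hmp.integral_comp hemb g]
        exact integral_congr_ae (.of_forall fun z ↦ (hcomp z).symm)
    _ = ∫ x, ∫ r, g (x, r) ∂(.volumeIoiPow d) ∂μ.toSphere := integral_prod _ hg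
    _ = _ := by
        refine integral_congr_ae (.of_forall fun x ↦ ?_)
        simp only [Measure.volumeIoiPow, ENNReal.ofReal]
        rw [integral_withDensity_eq_integral_smul
            (measurable_subtype_coe.pow_const _).real_toNNReal,
          integral_subtype_comap measurableSet_Ioi
            fun r : ℝ ↦ Real.toNNReal (r ^ d) • f (r • (x : E))]
        refine setIntegral_congr_fun measurableSet_Ioi fun r (hr : 0 < r) ↦ ?_
        simp only [NNReal.smul_def, Real.coe_toNNReal _ (pow_nonneg hr.le d)]

end Polar

/-- `q` is continuous on `E \ {0}` and positively homogeneous of degree `k` there; nothing is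
required of the value `q 0`. -/
structure ContHomogeneous {E F : Type*} [NormedAddCommGroup E] [NormedSpace ℝ E]
    [NormedAddCommGroup F] [NormedSpace ℝ F] (k : ℕ) (q : E → F) : Prop where
  continuousOn : ContinuousOn q {0}ᶜ
  map_smul : ∀ z ≠ 0, ∀ r : ℝ, 0 < r → q (r • z) = r ^ k • q z

namespace ContHomogeneous

open Module

section NormedSpace

variable {E F : Type*} [NormedAddCommGroup E] [NormedSpace ℝ E]
  [NormedAddCommGroup F] [NormedSpace ℝ F] {k l : ℕ} {q : E → F}

lemma eq_norm_pow_smul (hq : ContHomogeneous k q) {z : E} (hz : z ≠ 0) :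
    q z = ‖z‖ ^ k • q (‖z‖⁻¹ • z) := by
  rw [← hq.map_smul _ (smul_ne_zero (inv_ne_zero (norm_ne_zero_iff.2 hz)) hz) _
    (norm_pos_iff.2 hz), smul_inv_smul₀ (norm_ne_zero_iff.2 hz)]

lemma smul {p : E → ℝ} (hp : ContHomogeneous k p) (hq : ContHomogeneous l q) :
    ContHomogeneous (k + l) fun z ↦ p z • q z where
  continuousOn := hp.continuousOn.smul hq.continuousOn
  map_smul z hz r hr := by
    rw [hp.map_smul z hz r hr, hq.map_smul z hz r hr, smul_assoc, smul_comm (p z), smul_smul,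
      pow_add]

lemma pow {q : E → ℝ} (hq : ContHomogeneous k q) (j : ℕ) :
    ContHomogeneous (k * j) fun z ↦ q z ^ j where
  continuousOn := hq.continuousOn.pow j
  map_smul z hz r hr := by
    simp only [hq.map_smul z hz r hr, smul_eq_mul, mul_pow, pow_mul]

lemma prodMk {G : Type*} [NormedAddCommGroup G] [NormedSpace ℝ G] {p : E → G}
    (hq : ContHomogeneous k q) (hp : ContHomogeneous k p) :
    ContHomogeneous k fun z ↦ (q z, p z) where
  continuousOn := hq.continuousOn.prodMk hp.continuousOn
  map_smul z hz r hr := by rw [hq.map_smul z hz r hr, hp.map_smul z hz r hr, Prod.smul_mk]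

lemma continuous_comp {G : Type*} [NormedAddCommGroup G] [NormedSpace ℝ G] {φ : F → G}
    (hφ : Continuous φ) (hq : ContHomogeneous 0 q) : ContHomogeneous 0 fun z ↦ φ (q z) where
  continuousOn := hφ.comp_continuousOn hq.continuousOn
  map_smul z hz r hr := by rw [hq.map_smul z hz r hr, pow_zero, one_smul, one_smul]

lemma fderiv_apply_self (hq : ContHomogeneous k q) {z : E} (hz : z ≠ 0)
    (hd : DifferentiableAt ℝ q z) : fderiv ℝ q z z = (k : ℝ) • q z := by
  have hray : HasDerivAt (fun r : ℝ ↦ q (r • z)) (fderiv ℝ q z z) 1 := by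
    have hline : HasDerivAt (fun r : ℝ ↦ r • z) z 1 := by
      simpa only [id, one_smul] using (hasDerivAt_id (1 : ℝ)).smul_const z
    exact HasFDerivAt.comp_hasDerivAt (l := q) 1 (by simpa only [one_smul] using hd.hasFDerivAt)
      hline
  have hpow : HasDerivAt (fun r : ℝ ↦ r ^ k • q z) ((k : ℝ) • q z) 1 := by
    simpa only [one_pow, mul_one] using (hasDerivAt_pow k (1 : ℝ)).smul_const (q z)
  refine hray.unique (hpow.congr_of_eventuallyEq ?_)
  filter_upwards [Ioi_mem_nhds zero_lt_one] with r hr using hq.map_smul z hz r hr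

lemma fderiv (hq : ContHomogeneous (k + 1) q) (hd : ContDiffOn ℝ 1 q {0}ᶜ) :
    ContHomogeneous k (fderiv ℝ q) where
  continuousOn := hd.continuousOn_fderiv_of_isOpen isOpen_compl_singleton le_rfl
  map_smul z hz r hr := by
    have hdiff {w : E} (hw : w ≠ 0) : HasFDerivAt q (_root_.fderiv ℝ q w) w :=
      ((hd.contDiffAt (isOpen_compl_singleton.mem_nhds hw)).differentiableAt
        one_ne_zero).hasFDerivAt
    have hscale : HasFDerivAt (fun w ↦ q (r • w)) (r • _root_.fderiv ℝ q (r • z)) z := by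
      simpa [Function.comp_def] using
        (hdiff (smul_ne_zero hr.ne' hz)).comp z ((hasFDerivAt_id z).const_smul r)
    have hpow : HasFDerivAt (fun w ↦ q (r • w)) (r ^ (k + 1) • _root_.fderiv ℝ q z) z := by
      refine ((hdiff hz).const_smul (r ^ (k + 1))).congr_of_eventuallyEq ?_
      filter_upwards [isOpen_compl_singleton.mem_nhds hz] with w hw using hq.map_smul w hw r hr
    rw [pow_succ', mul_smul] at hpow
    exact smul_right_injective _ hr.ne' (hscale.unique hpow)

lemma continuousOn_sphere (hq : ContHomogeneous k q) : ContinuousOn q (sphere (0 : E) 1) :=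
  hq.continuousOn.mono fun _ hx ↦ ne_zero_of_mem_sphere one_ne_zero ⟨_, hx⟩

lemma exists_norm_le [ProperSpace E] (hq : ContHomogeneous k q) :
    ∃ C, 0 ≤ C ∧ ∀ z ≠ 0, ‖q z‖ ≤ C * ‖z‖ ^ k := by
  obtain ⟨C, hC⟩ := (isCompact_sphere (0 : E) 1).exists_bound_of_continuousOn
    hq.continuousOn_sphere
  refine ⟨max C 0, le_max_right _ _, fun z hz ↦ ?_⟩
  rw [hq.eq_norm_pow_smul hz, norm_smul, norm_pow, norm_norm, mul_comm]
  gcongr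
  exact (hC _ (by simp [norm_smul, hz])).trans (le_max_left _ _)

lemma exists_le [ProperSpace E] {q : E → ℝ} (hq : ContHomogeneous k q)
    (hpos : ∀ z ≠ 0, 0 < q z) : ∃ c, 0 < c ∧ ∀ z ≠ 0, c * ‖z‖ ^ k ≤ q z := by
  obtain ⟨c, hc, hle⟩ := (isCompact_sphere (0 : E) 1).exists_forall_le' hq.continuousOn_sphere
    fun x hx ↦ hpos x (ne_zero_of_mem_sphere one_ne_zero ⟨x, hx⟩)
  refine ⟨c, hc, fun z hz ↦ ?_⟩
  rw [hq.eq_norm_pow_smul hz, smul_eq_mul, mul_comm]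
  gcongr
  exact hle _ (by simp [norm_smul, hz])

theorem exists_lipschitzWith [ProperSpace E] (hq : ContHomogeneous 1 q)
    (hd : ContDiffOn ℝ 1 q {0}ᶜ) (hq₀ : q 0 = 0) : ∃ C, LipschitzWith C q := by
  have hdiff {w : E} (hw : w ≠ 0) : DifferentiableAt ℝ q w :=
    (hd.contDiffAt (isOpen_compl_singleton.mem_nhds hw)).differentiableAt one_ne_zero
  obtain ⟨C, hC, hbound⟩ := (hq.fderiv hd).exists_norm_le
  simp only [pow_zero, mul_one] at hbound
  have hnorm (z : E) : ‖q z‖ ≤ C * ‖z‖ := by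
    rcases eq_or_ne z 0 with rfl | hz
    · simp only [hq₀, norm_zero, mul_zero, le_refl]
    · have heuler := hq.fderiv_apply_self hz (hdiff hz)
      rw [Nat.cast_one, one_smul] at heuler
      exact heuler ▸ (_root_.fderiv ℝ q z).le_of_opNorm_le (hbound z hz) z
  refine ⟨⟨C, hC⟩, .of_dist_le_mul fun z w ↦ ?_⟩
  by_cases hseg : (0 : E) ∈ segment ℝ z w
  · have hdist := dist_add_dist_of_mem_segment hseg
    rw [dist_zero_right, dist_zero_left] at hdist
    calc dist (q z) (q w) ≤ ‖q z‖ + ‖q w‖ := dist_le_norm_add_norm _ _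
      _ ≤ C * (‖z‖ + ‖w‖) := by rw [mul_add]; exact add_le_add (hnorm z) (hnorm w)
      _ = C * dist z w := by rw [hdist]
  · have hne : ∀ u ∈ segment ℝ z w, u ≠ 0 := fun u hu hu₀ ↦ hseg (hu₀ ▸ hu)
    rw [dist_comm (q z), dist_comm z, dist_eq_norm, dist_eq_norm]
    exact (convex_segment z w).norm_image_sub_le_of_norm_fderiv_le (fun u hu ↦ hdiff (hne u hu))
      (fun u hu ↦ hbound u (hne u hu)) (left_mem_segment ℝ z w) (right_mem_segment ℝ z w)

end NormedSpace

variable {E : Type*} [NormedAddCommGroup E] [NormedSpace ℝ E] [FiniteDimensional ℝ E]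
  [MeasurableSpace E] [BorelSpace E] [Nontrivial E] (μ : Measure E) [μ.IsAddHaarMeasure]
  {k : ℕ} {q h : E → ℝ}

lemma aestronglyMeasurable (hq : ContHomogeneous k q) : AEStronglyMeasurable q μ := by
  have := hq.continuousOn.aestronglyMeasurable (μ := μ) (measurableSet_singleton (0 : E)).compl
  rwa [restrict_compl_singleton] at this

lemma integrable_mul_exp (hq : ContHomogeneous k q) (hh : ContHomogeneous 1 h)
    (hpos : ∀ z ≠ 0, 0 < h z) : Integrable (fun z ↦ q z * exp (-(h z ^ 2 / 2))) μ := by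
  obtain ⟨C, hC, hqC⟩ := hq.exists_norm_le
  obtain ⟨c, hc, hch⟩ := hh.exists_le hpos
  have hgauss : Integrable (fun z : E ↦ ‖z‖ ^ k * exp (-(c ^ 2 / 2 * ‖z‖ ^ 2))) μ := by
    refine (integrable_fun_norm_addHaar μ
      (f := fun r ↦ r ^ k * exp (-(c ^ 2 / 2 * r ^ 2)))).2 ?_
    have := integrableOn_rpow_mul_exp_neg_mul_sq (by positivity : 0 < c ^ 2 / 2)
      (s := (finrank ℝ E - 1 + k : ℕ)) (neg_one_lt_zero.trans_le (Nat.cast_nonneg _))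
    simpa only [rpow_natCast, neg_mul, pow_add, mul_assoc, smul_eq_mul] using this
  refine (hgauss.const_mul C).mono' ((hq.aestronglyMeasurable μ).mul
    ((by fun_prop : Continuous fun s : ℝ ↦ exp (-(s ^ 2 / 2))).comp_aestronglyMeasurable
      (hh.aestronglyMeasurable μ))) ?_
  filter_upwards [compl_mem_ae_iff.2 (measure_singleton 0)] with z hz
  rw [norm_mul, norm_of_nonneg (exp_pos _).le, ← mul_assoc]
  gcongr
  · exact hqC z hz
  · have := pow_le_pow_left₀ (by positivity) (hch z hz) 2
    rw [pow_one, mul_pow] at this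
    linarith

theorem integral_mul_exp (hq : ContHomogeneous k q) (hh : ContHomogeneous 1 h)
    (hpos : ∀ z ≠ 0, 0 < h z) :
    ∫ z, q z * exp (-(h z ^ 2 / 2)) ∂μ = halfGaussianMoment (finrank ℝ E - 1 + k) *
      ∫ x : sphere (0 : E) 1, q x / h x ^ (finrank ℝ E + k) ∂μ.toSphere := by
  rw [integral_eq_integral_toSphere_integral_Ioi μ (hq.integrable_mul_exp μ hh hpos),
    ← integral_const_mul]
  refine integral_congr_ae (.of_forall fun x ↦ ?_)
  have hx : (x : E) ≠ 0 := ne_zero_of_mem_sphere one_ne_zero x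
  have hd : finrank ℝ E - 1 + k + 1 = finrank ℝ E + k := by
    have : 0 < finrank ℝ E := finrank_pos
    omega
  calc ∫ r in Set.Ioi (0 : ℝ), r ^ (finrank ℝ E - 1) •
        (q (r • (x : E)) * exp (-(h (r • (x : E)) ^ 2 / 2)))
      = ∫ r in Set.Ioi (0 : ℝ),
          q x * (r ^ (finrank ℝ E - 1 + k) * exp (-((r * h x) ^ 2 / 2))) := by
        refine setIntegral_congr_fun measurableSet_Ioi fun r (hr : 0 < r) ↦ ?_
        simp only [hq.map_smul _ hx r hr, hh.map_smul _ hx r hr, smul_eq_mul, pow_one]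
        ring
    _ = _ := by
        rw [integral_const_mul, integral_pow_mul_exp_neg_mul_sq _ (hpos x hx), hd]
        ring

end ContHomogeneous

section Determinant

variable {E : Type*} [NormedAddCommGroup E] [InnerProductSpace ℝ E] [FiniteDimensional ℝ E]

theorem det_pos_of_forall_inner_pos {B : E →L[ℝ] E} (hB : ∀ v ≠ 0, 0 < ⟪B v, v⟫_ℝ) :
    0 < B.det := by
  -- The determinant cannot vanish along the segment from the identity to `B`.
  set φ : ℝ → ℝ := fun t ↦ ((1 - t) • ContinuousLinearMap.id ℝ E + t • B).det
  have hφ : Continuous φ := ContinuousLinearMap.continuous_det.comp (by fun_prop)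
  have hφ_ne : ∀ t ∈ Set.Icc (0 : ℝ) 1, φ t ≠ 0 := fun t ht h₀ ↦ by
    obtain ⟨v, hv_ker, hv⟩ :=
      (Submodule.ne_bot_iff _).1 (LinearMap.bot_lt_ker_of_det_eq_zero h₀).ne'
    have hvB := hB v hv
    have hvv : 0 < ⟪v, v⟫_ℝ := real_inner_self_pos.2 hv
    have hsum : (1 - t) * ⟪v, v⟫_ℝ + t * ⟪B v, v⟫_ℝ = 0 := by
      simpa [inner_add_left, real_inner_smul_left] using
        congrArg (fun w ↦ ⟪w, v⟫_ℝ) (LinearMap.mem_ker.1 hv_ker)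
    rcases ht.1.eq_or_lt with rfl | ht₀
    · linarith
    · nlinarith [mul_pos ht₀ hvB, mul_nonneg (sub_nonneg.2 ht.2) hvv.le]
  have hφ₀ : φ 0 = 1 := by simp [φ, ContinuousLinearMap.det]
  have hφ₁ : φ 1 = B.det := by simp [φ]
  rw [← hφ₁]
  by_contra! hle
  obtain ⟨t, ht, ht₀⟩ := intermediate_value_Icc' zero_le_one hφ.continuousOn
    ⟨hle, by rw [hφ₀]; exact zero_le_one⟩
  exact hφ_ne t ht ht₀

end Determinant

/-- Support functions of convex bodies of class `C²₊` having the origin as an interior point,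
extended to be positively homogeneous of degree one on the whole space. -/
structure IsC2PlusSupportFunction {E : Type*} [NormedAddCommGroup E] [InnerProductSpace ℝ E]
    [FiniteDimensional ℝ E] (h : E → ℝ) : Prop where
  map_smul : ∀ z, ∀ r : ℝ, 0 ≤ r → h (r • z) = r * h z
  map_add_le : ∀ z w, h (z + w) ≤ h z + h w
  pos : ∀ z ≠ 0, 0 < h z
  contDiffOn : ContDiffOn ℝ 2 h {0}ᶜ
  posDef : ∀ x : sphere (0 : E) 1, ∀ v ≠ 0,
    0 < ⟪(fderiv ℝ (gradient h) x + InnerProductSpace.rankOne ℝ (x : E) (x : E)) v, v⟫_ℝ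

section

variable {E : Type*} [NormedAddCommGroup E] [InnerProductSpace ℝ E] [FiniteDimensional ℝ E]

/-- The Legendre map of the Minkowski norm `h`, that is, the gradient of `h² / 2`; it sends a
direction to a multiple of the boundary point with that outer normal. -/
def legendre (h : E → ℝ) (z : E) : E := h z • gradient h z

/-- The density, with respect to the surface measure of the unit sphere and up to the factor
`finrank ℝ E`, of the cone-volume measure of the body with support function `h`. -/
def coneVolumeDensity (h : E → ℝ) (z : E) : ℝ :=
  h z * (fderiv ℝ (gradient h) z + InnerProductSpace.rankOne ℝ z z).det

end

namespace IsC2PlusSupportFunction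

open InnerProductSpace Module

variable {E : Type*} [NormedAddCommGroup E] [InnerProductSpace ℝ E] [FiniteDimensional ℝ E]
  {h : E → ℝ} {z w : E}

section Gradient

lemma map_zero (hh : IsC2PlusSupportFunction h) : h 0 = 0 := by
  simpa using hh.map_smul 0 0 le_rfl

lemma contHomogeneous (hh : IsC2PlusSupportFunction h) : ContHomogeneous 1 h where
  continuousOn := hh.contDiffOn.continuousOn
  map_smul z _ r hr := by rw [hh.map_smul z r hr.le, pow_one, smul_eq_mul]

lemma hasGradientAt (hh : IsC2PlusSupportFunction h) (hz : z ≠ 0) :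
    HasGradientAt h (gradient h z) z :=
  ((hh.contDiffOn.contDiffAt (isOpen_compl_singleton.mem_nhds hz)).differentiableAt
    two_ne_zero).hasGradientAt

lemma contDiffOn_gradient (hh : IsC2PlusSupportFunction h) :
    ContDiffOn ℝ 1 (gradient h) {0}ᶜ :=
  (toDual ℝ E).symm.toContinuousLinearEquiv.contDiff.comp_contDiffOn
    (hh.contDiffOn.fderiv_of_isOpen isOpen_compl_singleton (by norm_num))

lemma hasFDerivAt_gradient (hh : IsC2PlusSupportFunction h) (hz : z ≠ 0) :
    HasFDerivAt (gradient h) (fderiv ℝ (gradient h) z) z :=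
  ((hh.contDiffOn_gradient.contDiffAt (isOpen_compl_singleton.mem_nhds hz)).differentiableAt
    one_ne_zero).hasFDerivAt

lemma contHomogeneous_gradient (hh : IsC2PlusSupportFunction h) :
    ContHomogeneous 0 (gradient h) :=
  .continuous_comp (φ := (toDual ℝ E).symm) (toDual ℝ E).symm.continuous
    (hh.contHomogeneous.fderiv (k := 0) (hh.contDiffOn.of_le one_le_two))

lemma inner_gradient_self (hh : IsC2PlusSupportFunction h) (hz : z ≠ 0) :
    ⟪gradient h z, z⟫_ℝ = h z := by
  rw [← toDual_apply_apply (𝕜 := ℝ), ← (hh.hasGradientAt hz).hasFDerivAt.fderiv,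
    hh.contHomogeneous.fderiv_apply_self hz (hh.hasGradientAt hz).differentiableAt,
    Nat.cast_one, one_smul]

lemma inner_gradient_le (hh : IsC2PlusSupportFunction h) (hz : z ≠ 0) (w : E) :
    ⟪gradient h z, w⟫_ℝ ≤ h w := by
  have hline : HasDerivAt (fun t : ℝ ↦ h (z + t • w)) ⟪gradient h z, w⟫_ℝ 0 :=
    (hh.hasGradientAt hz).hasFDerivAt.hasLineDerivAt w
  refine le_of_tendsto hline.tendsto_slope_zero_right ?_
  filter_upwards [self_mem_nhdsWithin] with t (ht : 0 < t)
  rw [zero_add, zero_smul, add_zero, smul_eq_mul, inv_mul_le_iff₀ ht, ← hh.map_smul w t ht.le]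
  linarith [hh.map_add_le z (t • w)]

lemma fderiv_gradient_apply_self (hh : IsC2PlusSupportFunction h) (hz : z ≠ 0) :
    fderiv ℝ (gradient h) z z = 0 := by
  rw [hh.contHomogeneous_gradient.fderiv_apply_self hz
    (hh.hasFDerivAt_gradient hz).differentiableAt, Nat.cast_zero, zero_smul]

lemma inner_fderiv_gradient_apply (hh : IsC2PlusSupportFunction h) (hz : z ≠ 0) (v : E) :
    ⟪fderiv ℝ (gradient h) z v, z⟫_ℝ = 0 := by
  have hinner := (hh.hasFDerivAt_gradient hz).inner ℝ (hasFDerivAt_id z)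
  have heq : h =ᶠ[𝓝 z] fun w ↦ ⟪gradient h w, id w⟫_ℝ := by
    filter_upwards [isOpen_compl_singleton.mem_nhds hz] with w hw
    exact (hh.inner_gradient_self hw).symm
  have := (hinner.congr_of_eventuallyEq heq).unique (hh.hasGradientAt hz).hasFDerivAt
  simpa using congrArg (fun L ↦ L v) this

end Gradient

section FundamentalTensor

lemma contHomogeneous_legendre (hh : IsC2PlusSupportFunction h) :
    ContHomogeneous 1 (legendre h) :=
  hh.contHomogeneous.smul hh.contHomogeneous_gradient

lemma contDiffOn_legendre (hh : IsC2PlusSupportFunction h) :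
    ContDiffOn ℝ 1 (legendre h) {0}ᶜ :=
  (hh.contDiffOn.of_le one_le_two).smul hh.contDiffOn_gradient

lemma inner_legendre_self (hh : IsC2PlusSupportFunction h) (z : E) :
    ⟪legendre h z, z⟫_ℝ = h z ^ 2 := by
  rcases eq_or_ne z 0 with rfl | hz
  · simp [hh.map_zero]
  · rw [legendre, real_inner_smul_left, hh.inner_gradient_self hz, sq]

lemma hasFDerivAt_legendre (hh : IsC2PlusSupportFunction h) (hz : z ≠ 0) :
    HasFDerivAt (legendre h) (h z • fderiv ℝ (gradient h) z +
      rankOne ℝ (gradient h z) (gradient h z)) z :=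
  (hh.hasGradientAt hz).hasFDerivAt.smul (hh.hasFDerivAt_gradient hz)

lemma contHomogeneous_fderiv_legendre (hh : IsC2PlusSupportFunction h) :
    ContHomogeneous 0 (fderiv ℝ (legendre h)) :=
  hh.contHomogeneous_legendre.fderiv hh.contDiffOn_legendre

lemma inner_fderiv_legendre_apply (hh : IsC2PlusSupportFunction h) (hz : z ≠ 0) (v : E) :
    ⟪fderiv ℝ (legendre h) z v, v⟫_ℝ =
      h z * ⟪fderiv ℝ (gradient h) z v, v⟫_ℝ + ⟪gradient h z, v⟫_ℝ ^ 2 := by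
  simp [(hh.hasFDerivAt_legendre hz).fderiv, inner_add_left, real_inner_smul_left, sq]

lemma inner_fderiv_legendre_pos (hh : IsC2PlusSupportFunction h) (hz : z ≠ 0) {v : E}
    (hv : v ≠ 0) : 0 < ⟪fderiv ℝ (legendre h) z v, v⟫_ℝ := by
  set x : sphere (0 : E) 1 := ⟨‖z‖⁻¹ • z, by simp [norm_smul, hz]⟩
  have hx : (x : E) ≠ 0 := ne_zero_of_mem_sphere one_ne_zero x
  have hhx := hh.pos x hx
  rw [hh.contHomogeneous_fderiv_legendre.eq_norm_pow_smul hz, pow_zero, one_smul]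
  change 0 < ⟪fderiv ℝ (legendre h) x v, v⟫_ℝ
  obtain ⟨α, w, hw, rfl⟩ : ∃ α : ℝ, ∃ w, ⟪(x : E), w⟫_ℝ = 0 ∧ α • (x : E) + w = v :=
    ⟨⟪(x : E), v⟫_ℝ, v - ⟪(x : E), v⟫_ℝ • (x : E),
      by simp [inner_sub_right, real_inner_smul_right], by abel⟩
  rw [hh.inner_fderiv_legendre_apply hx, map_add, _root_.map_smul,
    hh.fderiv_gradient_apply_self hx, smul_zero, zero_add, inner_add_right,
    real_inner_smul_right, hh.inner_fderiv_gradient_apply hx, mul_zero, zero_add]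
  rcases eq_or_ne w 0 with rfl | hw₀
  · rw [add_zero] at hv ⊢
    have hα : α ≠ 0 := (smul_ne_zero_iff.1 hv).1
    rw [inner_zero_right, mul_zero, zero_add, real_inner_smul_right, hh.inner_gradient_self hx]
    positivity
  · have hA : 0 < ⟪fderiv ℝ (gradient h) x w, w⟫_ℝ := by
      simpa [hw] using hh.posDef x w hw₀
    positivity

lemma contHomogeneous_det_fderiv_legendre_mul (hh : IsC2PlusSupportFunction h) {k : ℕ} {q : E → ℝ}
    (hq : ContHomogeneous k q) :
    ContHomogeneous k fun z ↦ (fderiv ℝ (legendre h) z).det * q z := by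
  simpa only [zero_add, smul_eq_mul] using
    (hh.contHomogeneous_fderiv_legendre.continuous_comp
      ContinuousLinearMap.continuous_det).smul hq

lemma det_fderiv_legendre_pos (hh : IsC2PlusSupportFunction h) (hz : z ≠ 0) :
    0 < (fderiv ℝ (legendre h) z).det :=
  det_pos_of_forall_inner_pos fun _ hv ↦ hh.inner_fderiv_legendre_pos hz hv

lemma det_fderiv_legendre (hh : IsC2PlusSupportFunction h) (x : sphere (0 : E) 1) :
    (fderiv ℝ (legendre h) x).det = h x ^ finrank ℝ E * coneVolumeDensity h x := by
  have hx : (x : E) ≠ 0 := ne_zero_of_mem_sphere one_ne_zero x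
  have hxx : ⟪(x : E), x⟫_ℝ = 1 := by simp
  have hhx := (hh.pos x hx).ne'
  have hXx := hh.inner_gradient_self hx
  have hG := (hh.hasFDerivAt_legendre hx).fderiv
  set A := fderiv ℝ (gradient h) x
  set X := gradient h x
  have hAx : A x = 0 := hh.fderiv_gradient_apply_self hx
  have hxA (v : E) : ⟪(x : E), A v⟫_ℝ = 0 := by
    rw [real_inner_comm]
    exact hh.inner_fderiv_gradient_apply hx v
  -- The two maps differ by the factor `h x` and by rank-one perturbations of the identity.
  set L := LinearMap.transvection (innerSL ℝ (x : E)).toLinearMap ((h x)⁻¹ • X - x)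
  set R := LinearMap.transvection (innerSL ℝ (X - x)).toLinearMap (x : E)
  have hL : LinearMap.det L = 1 := by
    simp [L, LinearMap.transvection.det, inner_sub_right, inner_smul_right, real_inner_comm X,
      hXx, hhx]
  have hR : LinearMap.det R = h x := by
    simp [R, LinearMap.transvection.det, hXx]
  have hfactor : (fderiv ℝ (legendre h) x).toLinearMap =
      L ∘ₗ (h x • ((A + rankOne ℝ (x : E) (x : E)).toLinearMap ∘ₗ R)) := by
    ext1 v
    simp only [hG, L, R, LinearMap.transvection.apply,
      LinearMap.comp_apply, LinearMap.smul_apply, ContinuousLinearMap.coe_coe, _root_.add_apply,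
      _root_.smul_apply, rankOne_apply, innerSL_apply_apply, map_add, _root_.map_smul, hAx, hxA,
      hxx, inner_sub_left, inner_zero_right]
    match_scalars <;> field_simp <;> ring
  rw [ContinuousLinearMap.det, hfactor, LinearMap.det_comp, LinearMap.det_smul,
    LinearMap.det_comp, hL, hR, coneVolumeDensity, ContinuousLinearMap.det]
  ring

lemma coneVolumeDensity_pos (hh : IsC2PlusSupportFunction h) (x : sphere (0 : E) 1) :
    0 < coneVolumeDensity h x :=
  mul_pos (hh.pos x (ne_zero_of_mem_sphere one_ne_zero x))
    (det_pos_of_forall_inner_pos (hh.posDef x))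

lemma continuousOn_coneVolumeDensity (hh : IsC2PlusSupportFunction h) :
    ContinuousOn (coneVolumeDensity h) {0}ᶜ := by
  have hA : ContinuousOn (fderiv ℝ (gradient h)) {0}ᶜ :=
    hh.contDiffOn_gradient.continuousOn_fderiv_of_isOpen isOpen_compl_singleton le_rfl
  have hI : Continuous fun z : E ↦ rankOne ℝ z z := by
    simp only [rankOne_def]
    fun_prop
  exact hh.contDiffOn.continuousOn.mul
    (ContinuousLinearMap.continuous_det.comp_continuousOn (hA.add hI.continuousOn))

end FundamentalTensor

section Legendre

lemma exists_lipschitzWith (hh : IsC2PlusSupportFunction h) : ∃ C, LipschitzWith C h :=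
  hh.contHomogeneous.exists_lipschitzWith (hh.contDiffOn.of_le one_le_two) hh.map_zero

lemma exists_lipschitzWith_legendre (hh : IsC2PlusSupportFunction h) :
    ∃ C, LipschitzWith C (legendre h) :=
  hh.contHomogeneous_legendre.exists_lipschitzWith hh.contDiffOn_legendre
    (by rw [legendre, hh.map_zero, zero_smul])

lemma continuous (hh : IsC2PlusSupportFunction h) : Continuous h :=
  hh.exists_lipschitzWith.choose_spec.continuous

lemma hasGradientAt_sq_div_two (hh : IsC2PlusSupportFunction h) (z : E) :
    HasGradientAt (fun z ↦ h z ^ 2 / 2) (legendre h z) z := by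
  rcases eq_or_ne z 0 with rfl | hz
  · obtain ⟨C, hC⟩ := hh.exists_lipschitzWith
    have hO : (fun z ↦ h z ^ 2 / 2) =O[𝓝 0] fun z ↦ ‖z - 0‖ ^ 2 := by
      refine .of_bound (C ^ 2 / 2) (.of_forall fun z ↦ ?_)
      have hz : ‖h z‖ ≤ C * ‖z‖ := by simpa [hh.map_zero] using hC.dist_le_mul z 0
      rw [sub_zero, norm_div, norm_pow, norm_pow, norm_norm, norm_two, div_mul_eq_mul_div,
        ← mul_pow]
      gcongr
    rw [legendre, hh.map_zero, zero_smul, hasGradientAt_iff_hasFDerivAt, _root_.map_zero]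
    exact hO.hasFDerivAt one_lt_two
  · have := ((hh.hasGradientAt hz).hasFDerivAt.pow 2).mul_const (2⁻¹ : ℝ)
    rw [hasGradientAt_iff_hasFDerivAt]
    refine this.congr_fderiv ?_
    rw [legendre, map_smulₛₗ, smul_smul]
    congr 1
    simp

end Legendre

end IsC2PlusSupportFunction

section FenchelConjugate

variable {E : Type*} [NormedAddCommGroup E] [InnerProductSpace ℝ E]

/-- The function `e^{-φ*}`, where `φ* a = ⨆ z, ⟪a, z⟫ - φ z` is the Fenchel conjugate of `φ`; with
values in `ℝ≥0∞` it makes sense for every `φ`. -/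
def expNegConj (φ : E → ℝ) (a : E) : ℝ≥0∞ := ⨅ z, ENNReal.ofReal (exp (φ z - ⟪a, z⟫_ℝ))

lemma expNegConj_le (φ : E → ℝ) (a z : E) :
    expNegConj φ a ≤ ENNReal.ofReal (exp (φ z - ⟪a, z⟫_ℝ)) :=
  iInf_le _ z

variable [MeasurableSpace E] [BorelSpace E]

lemma measurable_expNegConj (φ : E → ℝ) : Measurable (expNegConj φ) :=
  (upperSemicontinuous_iInf fun z ↦ Continuous.upperSemicontinuous
    (ENNReal.continuous_ofReal.comp (by fun_prop))).measurable

theorem lintegral_expNegConj_mul_le [FiniteDimensional ℝ E] (φ ψ : E → ℝ) :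
    (∫⁻ a, expNegConj φ a) * ∫⁻ a, expNegConj ψ a ≤
      (∫⁻ a, expNegConj (fun z ↦ (φ z + ψ z) / 2) a) ^ 2 := by
  have hhalf : (0 : ℝ) < 2⁻¹ := by norm_num
  have hsqrt (r : ℝ) : ENNReal.ofReal (exp r) ^ (2⁻¹ : ℝ) = ENNReal.ofReal (exp (r / 2)) := by
    rw [ENNReal.ofReal_rpow_of_pos (exp_pos r), ← exp_mul, div_eq_mul_inv]
  have hpl := prekopa_leindler hhalf hhalf (by norm_num)
    (measurable_expNegConj φ) (measurable_expNegConj ψ)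
    (measurable_expNegConj fun z ↦ (φ z + ψ z) / 2) fun a b ↦ le_iInf fun z ↦ ?_
  · rwa [← ENNReal.mul_rpow_of_nonneg _ _ hhalf.le, ENNReal.rpow_inv_le_iff two_pos,
      ENNReal.rpow_two] at hpl
  calc expNegConj φ a ^ (2⁻¹ : ℝ) * expNegConj ψ b ^ (2⁻¹ : ℝ)
      ≤ ENNReal.ofReal (exp (φ z - ⟪a, z⟫_ℝ)) ^ (2⁻¹ : ℝ) *
          ENNReal.ofReal (exp (ψ z - ⟪b, z⟫_ℝ)) ^ (2⁻¹ : ℝ) := by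
        gcongr <;> exact expNegConj_le ..
    _ = _ := by
        rw [hsqrt, hsqrt, ← ENNReal.ofReal_mul (exp_pos _).le, ← exp_add, inner_add_left,
          real_inner_smul_left, real_inner_smul_left]
        ring_nf

end FenchelConjugate

namespace IsC2PlusSupportFunction

open InnerProductSpace Module

variable {E : Type*} [NormedAddCommGroup E] [InnerProductSpace ℝ E] [FiniteDimensional ℝ E]
  {h : E → ℝ} {z w : E}

section ChangeOfVariables

lemma injOn_legendre (hh : IsC2PlusSupportFunction h) : Set.InjOn (legendre h) {0}ᶜ := by
  intro z hz w hw hzw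
  by_contra hne
  set v := w - z
  have hseg : ∀ t ∈ Set.Icc (0 : ℝ) 1, z + t • v ≠ 0 := fun t ht h₀ ↦ by
    have hsum : (1 - t) * h z ^ 2 + t * h w ^ 2 = 0 := by
      rw [← hh.inner_legendre_self z, ← hh.inner_legendre_self w, ← hzw, ← real_inner_smul_right,
        ← real_inner_smul_right, ← inner_add_right, ← inner_zero_right (legendre h z), ← h₀]
      congr 1
      module
    have hz₂ := pow_pos (hh.pos z hz) 2
    have hw₂ := pow_pos (hh.pos w hw) 2
    rcases ht.1.eq_or_lt with rfl | ht₀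
    · linarith
    · linarith [mul_pos ht₀ hw₂, mul_nonneg (sub_nonneg.2 ht.2) hz₂.le]
  have hderiv : ∀ t ∈ Set.Icc (0 : ℝ) 1, HasDerivAt (fun t ↦ ⟪legendre h (z + t • v), v⟫_ℝ)
      ⟪fderiv ℝ (legendre h) (z + t • v) v, v⟫_ℝ t := fun t ht ↦ by
    have hL := (hh.hasFDerivAt_legendre (hseg t ht)).differentiableAt.hasFDerivAt
    simpa using (hL.comp_hasDerivAt t (hasDerivAt_add_smul_const z v t)).inner ℝ
      (hasDerivAt_const t v)
  obtain ⟨t, ht, ht₀⟩ := exists_hasDerivAt_eq_zero zero_lt_one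
    (HasDerivAt.continuousOn hderiv) (by simp [v, hzw])
    fun t ht ↦ hderiv t (Set.Ioo_subset_Icc_self ht)
  exact (hh.inner_fderiv_legendre_pos (hseg t (Set.Ioo_subset_Icc_self ht))
    (sub_ne_zero.2 (Ne.symm hne))).ne' ht₀

lemma surjective_legendre (hh : IsC2PlusSupportFunction h) : Function.Surjective (legendre h) := by
  -- A preimage of `a` is a minimizer of the coercive function `h² / 2 - ⟪a, ·⟫`.
  intro a
  obtain ⟨c, hc, hle⟩ := hh.contHomogeneous.exists_le hh.pos
  have hlower (z : E) : ‖z‖ * (c ^ 2 / 2 * ‖z‖ - ‖a‖) ≤ h z ^ 2 / 2 - ⟪a, z⟫_ℝ := by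
    have hcz : c * ‖z‖ ≤ h z := by
      rcases eq_or_ne z 0 with rfl | hz
      · simp [hh.map_zero]
      · simpa using hle z hz
    nlinarith [pow_le_pow_left₀ (by positivity) hcz 2, real_inner_le_norm a z]
  have hcoercive : Filter.Tendsto (fun z ↦ h z ^ 2 / 2 - ⟪a, z⟫_ℝ) (Filter.cocompact E) .atTop := by
    refine Filter.tendsto_atTop_mono hlower ?_
    have hnorm := tendsto_norm_cocompact_atTop (E := E)
    exact hnorm.atTop_mul_atTop₀ (Filter.tendsto_atTop_add_const_right _ (-‖a‖)
      (hnorm.const_mul_atTop (by positivity)))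
  obtain ⟨z, hz⟩ := ((hh.continuous.pow 2).div_const 2 |>.sub
    (continuous_const.inner continuous_id)).exists_forall_le hcoercive
  refine ⟨z, ?_⟩
  have hgrad := (hh.hasGradientAt_sq_div_two z).hasFDerivAt.sub (toDual ℝ E a).hasFDerivAt
  rw [← map_sub] at hgrad
  have hmin : IsLocalMin (fun z ↦ h z ^ 2 / 2 - toDual ℝ E a z) z := .of_forall hz
  exact sub_eq_zero.1 ((toDual ℝ E).map_eq_zero_iff.1 (hmin.hasFDerivAt_eq_zero hgrad))

lemma image_legendre (hh : IsC2PlusSupportFunction h) : legendre h '' {0}ᶜ = {0}ᶜ := by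
  have hzero (z : E) : legendre h z = 0 ↔ z = 0 := by
    refine ⟨fun hz ↦ of_not_not fun hz₀ ↦ ?_, fun hz ↦ by rw [hz, legendre, hh.map_zero, zero_smul]⟩
    have := hh.inner_legendre_self z
    rw [hz, inner_zero_left] at this
    exact (pow_pos (hh.pos z hz₀) 2).ne this
  ext a
  obtain ⟨z, rfl⟩ := hh.surjective_legendre a
  refine ⟨?_, fun hz ↦ ⟨z, (hzero z).not.1 hz, rfl⟩⟩
  rintro ⟨w, hw, hwz⟩
  exact hwz ▸ (hzero w).not.2 hw

variable [MeasurableSpace E] [BorelSpace E] [Nontrivial E]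

theorem lintegral_eq_lintegral_legendre (hh : IsC2PlusSupportFunction h) (μ : Measure E)
    [μ.IsAddHaarMeasure] (F : E → ℝ≥0∞) :
    ∫⁻ a, F a ∂μ =
      ∫⁻ z, ENNReal.ofReal (fderiv ℝ (legendre h) z).det * F (legendre h z) ∂μ := by
  have hcov := lintegral_image_eq_lintegral_abs_det_fderiv_mul μ
    (measurableSet_singleton (0 : E)).compl (fun z hz ↦
      (hh.hasFDerivAt_legendre hz).differentiableAt.hasFDerivAt.hasFDerivWithinAt)
    hh.injOn_legendre F
  rw [hh.image_legendre, restrict_compl_singleton] at hcov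
  rw [hcov]
  refine lintegral_congr_ae ?_
  filter_upwards [compl_mem_ae_iff.2 (measure_singleton 0)] with z hz
  rw [abs_of_pos (hh.det_fderiv_legendre_pos hz)]

end ChangeOfVariables

end IsC2PlusSupportFunction

section LegendreGaussian

variable {E : Type*} [NormedAddCommGroup E] [InnerProductSpace ℝ E] [FiniteDimensional ℝ E]
  [MeasurableSpace E] [BorelSpace E]

/-- The measure that the Legendre map carries to the one with density `e^{-g² / 2}`, where `g` is
the gauge of the body with support function `h`: note that `g ∘ legendre h = h`. -/
def legendreGaussian (h : E → ℝ) : Measure E :=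
  volume.withDensity fun z ↦ ENNReal.ofReal ((fderiv ℝ (legendre h) z).det * exp (-(h z ^ 2 / 2)))

namespace IsC2PlusSupportFunction

open Module

variable [Nontrivial E] {h : E → ℝ} {k : ℕ} {q : E → ℝ}

lemma ae_legendreGaussian_ne_zero : ∀ᵐ z ∂legendreGaussian h, z ≠ 0 :=
  withDensity_absolutelyContinuous _ _ (compl_mem_ae_iff.2 (measure_singleton 0))

lemma integrable_legendreGaussian_density (hh : IsC2PlusSupportFunction h) :
    Integrable fun z ↦ (fderiv ℝ (legendre h) z).det * exp (-(h z ^ 2 / 2)) :=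
  (hh.contHomogeneous_fderiv_legendre.continuous_comp
    ContinuousLinearMap.continuous_det).integrable_mul_exp volume hh.contHomogeneous hh.pos

lemma isFiniteMeasure_legendreGaussian (hh : IsC2PlusSupportFunction h) :
    IsFiniteMeasure (legendreGaussian h) :=
  isFiniteMeasure_withDensity_ofReal hh.integrable_legendreGaussian_density.2

lemma toReal_legendreGaussian_density_ae_eq (hh : IsC2PlusSupportFunction h) :
    ∀ᵐ z : E, (ENNReal.ofReal ((fderiv ℝ (legendre h) z).det * exp (-(h z ^ 2 / 2)))).toReal * q z =
      (fderiv ℝ (legendre h) z).det * q z * exp (-(h z ^ 2 / 2)) := by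
  filter_upwards [compl_mem_ae_iff.2 (measure_singleton 0)] with z hz
  rw [ENNReal.toReal_ofReal (mul_pos (hh.det_fderiv_legendre_pos hz) (exp_pos _)).le]
  ring

lemma integrable_legendreGaussian (hh : IsC2PlusSupportFunction h) (hq : ContHomogeneous k q) :
    Integrable q (legendreGaussian h) := by
  rw [legendreGaussian, integrable_withDensity_iff_integrable_smul₀'
    hh.integrable_legendreGaussian_density.1.aemeasurable.ennreal_ofReal
    (.of_forall fun _ ↦ ENNReal.ofReal_lt_top)]
  exact (integrable_congr hh.toReal_legendreGaussian_density_ae_eq).2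
    ((hh.contHomogeneous_det_fderiv_legendre_mul hq).integrable_mul_exp volume
      hh.contHomogeneous hh.pos)

theorem integral_legendreGaussian (hh : IsC2PlusSupportFunction h) (hq : ContHomogeneous k q) :
    ∫ z, q z ∂legendreGaussian h = halfGaussianMoment (finrank ℝ E - 1 + k) *
      ∫ x : sphere (0 : E) 1, q x / h x ^ k * coneVolumeDensity h x ∂volume.toSphere := by
  rw [legendreGaussian, integral_withDensity_eq_integral_toReal_smul₀
    hh.integrable_legendreGaussian_density.1.aemeasurable.ennreal_ofReal
    (.of_forall fun _ ↦ ENNReal.ofReal_lt_top)]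
  simp only [smul_eq_mul]
  rw [integral_congr_ae hh.toReal_legendreGaussian_density_ae_eq,
    (hh.contHomogeneous_det_fderiv_legendre_mul hq).integral_mul_exp volume
      hh.contHomogeneous hh.pos]
  congr 1
  refine integral_congr_ae (.of_forall fun x ↦ ?_)
  have := (hh.pos x (ne_zero_of_mem_sphere one_ne_zero x)).ne'
  simp only [hh.det_fderiv_legendre]
  field_simp
  ring

theorem lintegral_legendreGaussian (hh : IsC2PlusSupportFunction h) (φ : E → ℝ) :
    ∫⁻ z, ENNReal.ofReal (exp (φ z)) ∂legendreGaussian h =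
      ∫⁻ z, ENNReal.ofReal (fderiv ℝ (legendre h) z).det *
        ENNReal.ofReal (exp (φ z - h z ^ 2 / 2)) := by
  rw [legendreGaussian, lintegral_withDensity_eq_lintegral_mul_non_measurable₀ _
    hh.integrable_legendreGaussian_density.1.aemeasurable.ennreal_ofReal
    (.of_forall fun _ ↦ ENNReal.ofReal_lt_top)]
  refine lintegral_congr fun z ↦ ?_
  rw [Pi.mul_apply, ENNReal.ofReal_mul' (exp_pos _).le, mul_assoc,
    ← ENNReal.ofReal_mul (exp_pos _).le, ← exp_add, neg_add_eq_sub]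

end IsC2PlusSupportFunction

end LegendreGaussian

section SecondVariation

variable {E : Type*} [NormedAddCommGroup E] [InnerProductSpace ℝ E] {h : E → ℝ} {z : E}

/-- The perturbation of `h² / 2` along which the Prékopa–Leindler inequality is differentiated: the
argument of `h` is moved by `t • e` and its value by `-t * c`. -/
def shiftedHalfSq (h : E → ℝ) (e : E) (c t : ℝ) (z : E) : ℝ := (h (z + t • e) - t * c) ^ 2 / 2

/-- The excess over `h² / 2` of the mean of the two opposite perturbations. -/
def midpointExcess (h : E → ℝ) (e : E) (c t : ℝ) (z : E) : ℝ :=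
  (shiftedHalfSq h e c t z + shiftedHalfSq h e c (-t) z) / 2 - h z ^ 2 / 2

lemma midpointExcess_eq (h : E → ℝ) (e : E) (c t : ℝ) (z : E) :
    midpointExcess h e c t z =
      (h (z + t • e) ^ 2 / 2 + h (z + (-t) • e) ^ 2 / 2 - 2 * (h (z + (0 : ℝ) • e) ^ 2 / 2)) / 2 -
        c * t * (h (z + t • e) - h (z + (-t) • e)) / 2 + c ^ 2 * t ^ 2 / 2 := by
  rw [midpointExcess, shiftedHalfSq, shiftedHalfSq, zero_smul, add_zero]
  ring

variable [FiniteDimensional ℝ E]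

/-- The derivative of `t ↦ shiftedHalfSq h e c t z` at `t = 0`. -/
def firstVariation (h : E → ℝ) (e : E) (c : ℝ) (z : E) : ℝ := h z * (⟪gradient h z, e⟫_ℝ - c)

/-- Half the second derivative of `t ↦ shiftedHalfSq h e c t z` at `t = 0`. -/
def secondVariation (h : E → ℝ) (e : E) (c : ℝ) (z : E) : ℝ :=
  (⟪fderiv ℝ (legendre h) z e, e⟫_ℝ - 2 * c * ⟪gradient h z, e⟫_ℝ + c ^ 2) / 2

namespace IsC2PlusSupportFunction

lemma contHomogeneous_firstVariation (hh : IsC2PlusSupportFunction h) (e : E) (c : ℝ) :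
    ContHomogeneous 1 (firstVariation h e c) :=
  hh.contHomogeneous.smul (hh.contHomogeneous_gradient.continuous_comp
    (φ := fun x ↦ ⟪x, e⟫_ℝ - c) (by fun_prop))

lemma contHomogeneous_secondVariation (hh : IsC2PlusSupportFunction h) (e : E) (c : ℝ) :
    ContHomogeneous 0 (secondVariation h e c) :=
  (hh.contHomogeneous_fderiv_legendre.prodMk hh.contHomogeneous_gradient).continuous_comp
    (φ := fun p ↦ (⟪p.1 e, e⟫_ℝ - 2 * c * ⟪p.2, e⟫_ℝ + c ^ 2) / 2) (by fun_prop)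

lemma secondVariation_eq (hh : IsC2PlusSupportFunction h) (hz : z ≠ 0) (e : E) (c : ℝ) :
    secondVariation h e c z =
      (h z * ⟪fderiv ℝ (gradient h) z e, e⟫_ℝ + (⟪gradient h z, e⟫_ℝ - c) ^ 2) / 2 := by
  rw [secondVariation, hh.inner_fderiv_legendre_apply hz]
  ring

lemma continuous_midpointExcess (hh : IsC2PlusSupportFunction h) (e : E) (c t : ℝ) :
    Continuous (midpointExcess h e c t) := by
  have := hh.continuous
  unfold midpointExcess shiftedHalfSq
  fun_prop

lemma hasDerivAt_sq_div_two_line (hh : IsC2PlusSupportFunction h) (z e : E) (s : ℝ) :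
    HasDerivAt (fun s : ℝ ↦ h (z + s • e) ^ 2 / 2) ⟪legendre h (z + s • e), e⟫_ℝ s := by
  have := (hh.hasGradientAt_sq_div_two (z + s • e)).hasFDerivAt.comp_hasDerivAt s
    (hasDerivAt_add_smul_const z e s)
  rwa [InnerProductSpace.toDual_apply_apply] at this

lemma tendsto_midpointExcess_div_sq (hh : IsC2PlusSupportFunction h) (hz : z ≠ 0) (e : E) (c : ℝ) :
    Filter.Tendsto (fun t ↦ midpointExcess h e c t z / t ^ 2) (𝓝[>] 0)
      (𝓝 (secondVariation h e c z)) := by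
  have hz₀ : z + (0 : ℝ) • e ≠ 0 := by rwa [zero_smul, add_zero]
  have hL : HasDerivAt (fun s : ℝ ↦ ⟪legendre h (z + s • e), e⟫_ℝ)
      ⟪fderiv ℝ (legendre h) z e, e⟫_ℝ 0 := by
    have := (hh.hasFDerivAt_legendre hz₀).differentiableAt.hasFDerivAt.comp_hasDerivAt 0
      (hasDerivAt_add_smul_const z e 0)
    simpa using this.inner ℝ (hasDerivAt_const (0 : ℝ) e)
  have hquad := tendsto_second_difference_div_sq
    (.of_forall fun s ↦ hh.hasDerivAt_sq_div_two_line z e s) hL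
  have hlin : Filter.Tendsto (fun t : ℝ ↦ (h (z + t • e) - h (z + (-t) • e)) / t) (𝓝[>] 0)
      (𝓝 (2 * ⟪gradient h z, e⟫_ℝ)) := by
    have h₁ : HasDerivAt (fun t : ℝ ↦ h (z + t • e)) ⟪gradient h z, e⟫_ℝ 0 :=
      (hh.hasGradientAt hz).hasFDerivAt.hasLineDerivAt e
    have h₂ : HasDerivAt (fun t : ℝ ↦ h (z + (-t) • e)) (-⟪gradient h z, e⟫_ℝ) 0 := by
      rw [← neg_zero] at h₁
      exact (h₁.comp (0 : ℝ) (hasDerivAt_neg 0)).congr_deriv (mul_neg_one _)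
    have := (h₁.sub h₂).tendsto_slope_zero_right
    rw [sub_neg_eq_add, ← two_mul] at this
    refine this.congr fun t ↦ ?_
    simp [div_eq_inv_mul]
  have hsum := ((hquad.div_const 2).sub (hlin.const_mul (c / 2))).add_const (c ^ 2 / 2)
  refine (hsum.congr' ?_).trans_eq ?_
  · filter_upwards [self_mem_nhdsWithin] with t (ht : 0 < t)
    rw [midpointExcess_eq]
    field_simp
  · rw [secondVariation]
    ring_nf

lemma exists_abs_midpointExcess_le (hh : IsC2PlusSupportFunction h) (e : E) (c : ℝ) :
    ∃ C, ∀ t, 0 ≤ t → ∀ z, |midpointExcess h e c t z| ≤ C * t ^ 2 := by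
  obtain ⟨M, hM⟩ := hh.exists_lipschitzWith
  obtain ⟨Λ, hΛ⟩ := hh.exists_lipschitzWith_legendre
  refine ⟨Λ * ‖e‖ ^ 2 + |c| * M * ‖e‖ + c ^ 2 / 2, fun t ht z ↦ ?_⟩
  have hdist (s s' : ℝ) : dist (z + s • e) (z + s' • e) = |s - s'| * ‖e‖ := by
    rw [dist_add_left, dist_eq_norm, ← sub_smul, norm_smul, norm_eq_abs]
  have hquad := abs_second_difference_le (L := Λ * ‖e‖ ^ 2)
    (fun s ↦ hh.hasDerivAt_sq_div_two_line z e s) (fun s s' ↦ by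
      rw [← inner_sub_left]
      calc |⟪legendre h (z + s • e) - legendre h (z + s' • e), e⟫_ℝ|
          ≤ Λ * (|s - s'| * ‖e‖) * ‖e‖ := by
            refine (abs_real_inner_le_norm _ _).trans ?_
            gcongr
            rw [← dist_eq_norm, ← hdist]
            exact hΛ.dist_le_mul _ _
        _ = _ := by ring) ht
  have hlin : |h (z + t • e) - h (z + (-t) • e)| ≤ M * (2 * t * ‖e‖) := by
    refine (hM.dist_le_mul _ _).trans_eq ?_
    rw [hdist, sub_neg_eq_add, abs_of_nonneg (by positivity), ← two_mul]
  rw [midpointExcess_eq]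
  refine (abs_add_le _ _).trans ((add_le_add_left (abs_sub _ _) _).trans ?_)
  rw [abs_div, abs_div, abs_mul, abs_mul, abs_of_nonneg ht, abs_two,
    abs_of_nonneg (by positivity : 0 ≤ c ^ 2 * t ^ 2 / 2)]
  have := mul_le_mul_of_nonneg_left hlin (mul_nonneg (abs_nonneg c) ht)
  linarith

end IsC2PlusSupportFunction

end SecondVariation

section SphereInequality

namespace IsC2PlusSupportFunction

open Module

variable {E : Type*} [NormedAddCommGroup E] [InnerProductSpace ℝ E] [FiniteDimensional ℝ E]
  {h : E → ℝ} {w : E}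

lemma exp_firstVariation_le_expNegConj (hh : IsC2PlusSupportFunction h) (hw : w ≠ 0) (e : E)
    (c t : ℝ) : ENNReal.ofReal (exp (t * firstVariation h e c w - h w ^ 2 / 2)) ≤
      expNegConj (shiftedHalfSq h e c t) (legendre h w) := by
  refine le_iInf fun z ↦ ENNReal.ofReal_le_ofReal (exp_le_exp.2 ?_)
  have hsupp := mul_le_mul_of_nonneg_left (hh.inner_gradient_le hw (z + t • e)) (hh.pos w hw).le
  rw [inner_add_right, real_inner_smul_right] at hsupp
  rw [firstVariation, shiftedHalfSq, legendre, real_inner_smul_left]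
  linarith [two_mul_le_add_sq (h w) (h (z + t • e) - t * c)]

variable [MeasurableSpace E] [BorelSpace E] [Nontrivial E]

lemma lintegral_exp_firstVariation_le (hh : IsC2PlusSupportFunction h) (e : E) (c t : ℝ) :
    ∫⁻ z, ENNReal.ofReal (exp (t * firstVariation h e c z)) ∂legendreGaussian h ≤
      ∫⁻ a, expNegConj (shiftedHalfSq h e c t) a := by
  rw [hh.lintegral_legendreGaussian, hh.lintegral_eq_lintegral_legendre volume (expNegConj _)]
  refine lintegral_mono_ae ?_
  filter_upwards [compl_mem_ae_iff.2 (measure_singleton 0)] with z hz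
  exact mul_le_mul_right (hh.exp_firstVariation_le_expNegConj hz e c t) _

lemma lintegral_expNegConj_le_exp_midpointExcess (hh : IsC2PlusSupportFunction h) (e : E)
    (c t : ℝ) :
    ∫⁻ a, expNegConj (fun z ↦ (shiftedHalfSq h e c t z + shiftedHalfSq h e c (-t) z) / 2) a ≤
      ∫⁻ z, ENNReal.ofReal (exp (midpointExcess h e c t z)) ∂legendreGaussian h := by
  rw [hh.lintegral_legendreGaussian, hh.lintegral_eq_lintegral_legendre volume (expNegConj _)]
  refine lintegral_mono fun z ↦ ?_
  gcongr
  refine (expNegConj_le _ _ z).trans_eq ?_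
  rw [hh.inner_legendre_self, midpointExcess]
  ring_nf

lemma integral_firstVariation_sq_le (hh : IsC2PlusSupportFunction h) {e : E} {c : ℝ}
    (hc : ∫ z, firstVariation h e c z ∂legendreGaussian h = 0) :
    (∫ z, firstVariation h e c z ^ 2 ∂legendreGaussian h) / 2 ≤
      ∫ z, secondVariation h e c z ∂legendreGaussian h := by
  have := hh.isFiniteMeasure_legendreGaussian
  have hf := hh.contHomogeneous_firstVariation e c
  obtain ⟨C, hC⟩ := hh.exists_abs_midpointExcess_le e c
  refine integral_sq_le_of_lintegral_exp_mul_le (C := C) (hh.integrable_legendreGaussian hf)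
    (hh.integrable_legendreGaussian (hf.pow 2)) (hh.integrable_legendreGaussian (hf.pow 3)) hc
    (fun t ↦ (hh.continuous_midpointExcess e c t).aestronglyMeasurable)
    ?_ (ae_legendreGaussian_ne_zero.mono fun z hz ↦ hh.tendsto_midpointExcess_div_sq hz e c)
    fun t ↦ ?_
  · filter_upwards [self_mem_nhdsWithin] with t (ht : 0 < t)
    exact .of_forall (hC t ht.le)
  calc _ ≤ (∫⁻ a, expNegConj (shiftedHalfSq h e c t) a) *
          ∫⁻ a, expNegConj (shiftedHalfSq h e c (-t)) a :=
        mul_le_mul' (hh.lintegral_exp_firstVariation_le e c t)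
          (hh.lintegral_exp_firstVariation_le e c (-t))
    _ ≤ _ := lintegral_expNegConj_mul_le ..
    _ ≤ _ := pow_le_pow_left' (hh.lintegral_expNegConj_le_exp_midpointExcess e c t) 2

lemma finrank_mul_integral_sq_le (hh : IsC2PlusSupportFunction h) {e : E} {c : ℝ}
    (hc : ∫ x : sphere (0 : E) 1, (⟪gradient h x, e⟫_ℝ - c) * coneVolumeDensity h x
      ∂volume.toSphere = 0) :
    finrank ℝ E * ∫ x : sphere (0 : E) 1, (⟪gradient h x, e⟫_ℝ - c) ^ 2 * coneVolumeDensity h x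
        ∂volume.toSphere ≤
      ∫ x : sphere (0 : E) 1, (h x * ⟪fderiv ℝ (gradient h) x e, e⟫_ℝ +
        (⟪gradient h x, e⟫_ℝ - c) ^ 2) * coneVolumeDensity h x ∂volume.toSphere := by
  have hne (x : sphere (0 : E) 1) : (x : E) ≠ 0 := ne_zero_of_mem_sphere one_ne_zero x
  have hf := hh.contHomogeneous_firstVariation e c
  have hfx (j : ℕ) (x : sphere (0 : E) 1) :
      firstVariation h e c x ^ j / h x ^ j = (⟪gradient h x, e⟫_ℝ - c) ^ j := by
    rw [firstVariation, ← div_pow, mul_div_cancel_left₀ _ (hh.pos x (hne x)).ne']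
  have hfx₁ (x : sphere (0 : E) 1) := by simpa only [pow_one] using hfx 1 x
  have hvar : (∫ z, firstVariation h e c z ^ 2 ∂legendreGaussian h) / 2 ≤
      ∫ z, secondVariation h e c z ∂legendreGaussian h := by
    refine hh.integral_firstVariation_sq_le ?_
    simp only [hh.integral_legendreGaussian hf, pow_one, hfx₁, hc, mul_zero]
  have hM : halfGaussianMoment (finrank ℝ E - 1 + 1 * 2) =
      finrank ℝ E * halfGaussianMoment (finrank ℝ E - 1) := by
    rw [one_mul, halfGaussianMoment_add_two, Nat.cast_pred finrank_pos, sub_add_cancel]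
  simp only [hh.integral_legendreGaussian (hf.pow 2), hM, one_mul, hfx,
    hh.integral_legendreGaussian (hh.contHomogeneous_secondVariation e c), pow_zero, div_one,
    add_zero, hh.secondVariation_eq (hne _), div_mul_eq_mul_div, integral_div] at hvar
  refine le_of_mul_le_mul_left ?_ (halfGaussianMoment_pos (finrank ℝ E - 1))
  linarith

end IsC2PlusSupportFunction

end SphereInequality

section WeightedVariance

variable {α : Type*} [MeasurableSpace α] {μ : Measure α} {f w : α → ℝ}

lemma integral_sub_mean_mul (hw : Integrable w μ) (hfw : Integrable (fun x ↦ f x * w x) μ)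
    (hm : ∫ x, w x ∂μ ≠ 0) :
    ∫ x, (f x - (∫ x, f x * w x ∂μ) / ∫ x, w x ∂μ) * w x ∂μ = 0 := by
  simp only [sub_mul]
  rw [integral_sub hfw (hw.const_mul _), integral_const_mul, div_mul_cancel₀ _ hm, sub_self]

lemma integral_sub_mean_sq_mul (hw : Integrable w μ) (hfw : Integrable (fun x ↦ f x * w x) μ)
    (hf₂w : Integrable (fun x ↦ f x ^ 2 * w x) μ) (hm : ∫ x, w x ∂μ ≠ 0) :
    ∫ x, (f x - (∫ x, f x * w x ∂μ) / ∫ x, w x ∂μ) ^ 2 * w x ∂μ =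
      (∫ x, f x ^ 2 * w x ∂μ) - (∫ x, f x * w x ∂μ) ^ 2 / ∫ x, w x ∂μ := by
  set c := (∫ x, f x * w x ∂μ) / ∫ x, w x ∂μ with hc
  have hexpand (x : α) : (f x - c) ^ 2 * w x =
      f x ^ 2 * w x - 2 * c * (f x * w x) + c ^ 2 * w x := by ring
  simp only [hexpand]
  rw [integral_add (by fun_prop) (hw.const_mul _), integral_sub hf₂w (hfw.const_mul _),
    integral_const_mul, integral_const_mul, hc]
  field_simp
  ring

end WeightedVariance

namespace IsC2PlusSupportFunction

open Module

variable {E : Type*} [NormedAddCommGroup E] [InnerProductSpace ℝ E] [FiniteDimensional ℝ E]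
  {h : E → ℝ}

lemma continuousOn_inner_gradient (hh : IsC2PlusSupportFunction h) (e : E) :
    ContinuousOn (fun z ↦ ⟪gradient h z, e⟫_ℝ) {0}ᶜ :=
  hh.contHomogeneous_gradient.continuousOn.inner continuousOn_const

lemma continuousOn_inner_fderiv_gradient (hh : IsC2PlusSupportFunction h) (e : E) :
    ContinuousOn (fun z ↦ h z * ⟪fderiv ℝ (gradient h) z e, e⟫_ℝ) {0}ᶜ :=
  hh.contDiffOn.continuousOn.mul
    (((hh.contDiffOn_gradient.continuousOn_fderiv_of_isOpen isOpen_compl_singleton le_rfl).clm_apply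
      continuousOn_const).inner continuousOn_const)

variable [MeasurableSpace E] [BorelSpace E]

lemma integrable_mul_coneVolumeDensity (hh : IsC2PlusSupportFunction h) {f : E → ℝ}
    (hf : ContinuousOn f {0}ᶜ) :
    Integrable (fun x : sphere (0 : E) 1 ↦ f x * coneVolumeDensity h x) volume.toSphere :=
  integrable_toSphere_of_continuousOn volume (hf.mul hh.continuousOn_coneVolumeDensity)

lemma integral_inner_gradient_mul (hh : IsC2PlusSupportFunction h) (e : E) :
    ∫ x : sphere (0 : E) 1, ⟪gradient h x, e⟫_ℝ * coneVolumeDensity h x ∂volume.toSphere =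
      ⟪∫ x : sphere (0 : E) 1, coneVolumeDensity h x • gradient h x ∂volume.toSphere, e⟫_ℝ := by
  have hint := integrable_toSphere_of_continuousOn volume
    (hh.continuousOn_coneVolumeDensity.smul hh.contHomogeneous_gradient.continuousOn)
  rw [real_inner_comm]
  refine Eq.trans ?_ (integral_inner hint e)
  simp only [Pi.smul_apply', real_inner_smul_right, real_inner_comm e, mul_comm]

variable [Nontrivial E]

lemma integral_coneVolumeDensity_pos (hh : IsC2PlusSupportFunction h) :
    0 < ∫ x : sphere (0 : E) 1, coneVolumeDensity h x ∂volume.toSphere := by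
  rw [integral_pos_iff_support_of_nonneg (fun x ↦ (hh.coneVolumeDensity_pos x).le)
    (integrable_toSphere_of_continuousOn volume hh.continuousOn_coneVolumeDensity),
    Function.support_eq_univ fun x ↦ (hh.coneVolumeDensity_pos x).ne']
  exact Measure.measure_univ_pos.2 (Measure.toSphere_ne_zero _)

theorem finrank_sub_one_mul_integral_inner_sq_le (hh : IsC2PlusSupportFunction h) (e : E) :
    ((finrank ℝ E : ℝ) - 1) *
        ∫ x : sphere (0 : E) 1, ⟪gradient h x, e⟫_ℝ ^ 2 * coneVolumeDensity h x ∂volume.toSphere ≤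
      (∫ x : sphere (0 : E) 1, h x * ⟪fderiv ℝ (gradient h) x e, e⟫_ℝ * coneVolumeDensity h x
        ∂volume.toSphere) +
      ((finrank ℝ E : ℝ) - 1) *
        ⟪∫ x : sphere (0 : E) 1, coneVolumeDensity h x • gradient h x ∂volume.toSphere, e⟫_ℝ ^ 2 /
          ∫ x : sphere (0 : E) 1, coneVolumeDensity h x ∂volume.toSphere := by
  have hX := hh.continuousOn_inner_gradient e
  have hw := integrable_toSphere_of_continuousOn volume hh.continuousOn_coneVolumeDensity
  have hXw := hh.integrable_mul_coneVolumeDensity hX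
  have hX₂w := hh.integrable_mul_coneVolumeDensity (hX.pow 2)
  have hm := hh.integral_coneVolumeDensity_pos.ne'
  have hvar := integral_sub_mean_sq_mul hw hXw hX₂w hm
  have hle := hh.finrank_mul_integral_sq_le (integral_sub_mean_mul hw hXw hm)
  simp only [add_mul] at hle
  rw [integral_add (hh.integrable_mul_coneVolumeDensity (hh.continuousOn_inner_fderiv_gradient e))
    (hh.integrable_mul_coneVolumeDensity (f := fun z ↦ (⟪gradient h z, e⟫_ℝ - _) ^ 2)
      (by fun_prop)), hvar] at hle
  rw [← hh.integral_inner_gradient_mul, mul_div_assoc]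
  linarith

end IsC2PlusSupportFunction

open Module in
theorem key_inequality_general {E : Type*} [NormedAddCommGroup E] [InnerProductSpace ℝ E]
    [FiniteDimensional ℝ E] [Nontrivial E] [MeasurableSpace E] [BorelSpace E] {h : E → ℝ}
    (hh : IsC2PlusSupportFunction h) :
    ((finrank ℝ E : ℝ) - 1) *
        ∫ x : sphere (0 : E) 1, ‖gradient h x‖ ^ 2 * coneVolumeDensity h x ∂volume.toSphere ≤
      (∫ x : sphere (0 : E) 1, h x * LinearMap.trace ℝ E (fderiv ℝ (gradient h) x : E →ₗ[ℝ] E) *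
        coneVolumeDensity h x ∂volume.toSphere) +
      ((finrank ℝ E : ℝ) - 1) *
        ‖∫ x : sphere (0 : E) 1, coneVolumeDensity h x • gradient h x ∂volume.toSphere‖ ^ 2 /
          ∫ x : sphere (0 : E) 1, coneVolumeDensity h x ∂volume.toSphere := by
  set b := stdOrthonormalBasis ℝ E
  have hX (i) : Integrable (fun x : sphere (0 : E) 1 ↦
      ⟪gradient h x, b i⟫_ℝ ^ 2 * coneVolumeDensity h x) volume.toSphere :=
    hh.integrable_mul_coneVolumeDensity ((hh.continuousOn_inner_gradient (b i)).pow 2)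
  have htrace (x : E) : LinearMap.trace ℝ E (fderiv ℝ (gradient h) x : E →ₗ[ℝ] E) =
      ∑ i, ⟪fderiv ℝ (gradient h) x (b i), b i⟫_ℝ := by
    simp only [LinearMap.trace_eq_sum_inner _ b, ContinuousLinearMap.coe_coe, real_inner_comm]
  simp only [htrace, ← b.sum_sq_inner_left, Finset.mul_sum, Finset.sum_mul, Finset.sum_div]
  rw [integral_finsetSum _ fun i _ ↦ hX i,
    integral_finsetSum _ fun i _ ↦ hh.integrable_mul_coneVolumeDensity
      (hh.continuousOn_inner_fderiv_gradient (b i)), Finset.mul_sum, ← Finset.sum_add_distrib]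
  exact Finset.sum_le_sum fun i _ ↦ hh.finrank_sub_one_mul_integral_inner_sq_le (b i)

section SupportFunction

variable {n : ℕ} {K : Set (Eu n)}

lemma sfn_smul (K : Set (Eu n)) (z : Eu n) {r : ℝ} (hr : 0 ≤ r) :
    sfn K (r • z) = r * sfn K z := by
  rw [sfn, sfn, ← smul_eq_mul, ← Real.sSup_smul_of_nonneg hr, ← Set.image_smul, Set.image_image]
  simp only [real_inner_smul_left, smul_eq_mul]

lemma inner_le_sfn (hK : IsCompact K) {y : Eu n} (hy : y ∈ K) (z : Eu n) :
    ⟪z, y⟫_ℝ ≤ sfn K z :=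
  le_csSup (hK.image (by fun_prop : Continuous fun y ↦ ⟪z, y⟫_ℝ)).bddAbove ⟨y, hy, rfl⟩

lemma sfn_add_le (hK : IsCompact K) (hne : K.Nonempty) (z w : Eu n) :
    sfn K (z + w) ≤ sfn K z + sfn K w := by
  refine csSup_le (hne.image _) (Set.forall_mem_image.2 fun y hy ↦ ?_)
  rw [inner_add_left]
  exact add_le_add (inner_le_sfn hK hy z) (inner_le_sfn hK hy w)

lemma IsSmoothConvexBody.isC2PlusSupportFunction (hK : IsSmoothConvexBody K) :
    IsC2PlusSupportFunction (sfn K) where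
  map_smul z _ hr := sfn_smul K z hr
  map_add_le := sfn_add_le hK.compact (hK.interior_nonempty.mono interior_subset)
  pos z hz := by
    have hpos := hK.pos ⟨‖z‖⁻¹ • z, by simp [norm_smul, hz]⟩
    rw [sfn_smul K z (by positivity)] at hpos
    exact pos_of_mul_pos_right hpos (by positivity)
  contDiffOn := contDiffOn_infty.1 hK.smooth 2
  posDef := hK.posdef

end SupportFunction

/-- The key inequality `n ∫ |X|² dV ≤ ∫ h (Δ̄h + nh) dV + n |∫ X dV|² / ∫ dV`,
where `Δ̄h + nh = tr A` and `dV = (h/𝒦) dθ`. -/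
theorem key_inequality (n : ℕ) (hn : 1 ≤ n)
    (K : Set (Eu n)) (hK : IsSmoothConvexBody K) :
    (n : ℝ) * ∫ x : Sph n, ‖gradient (sfn K) (x : Eu n)‖ ^ 2 * dens K (x : Eu n) ∂sphMeas n ≤
      (∫ x : Sph n, sfn K (x : Eu n) *
          (LinearMap.trace ℝ (Eu n) (hessA K (x : Eu n) : Eu n →ₗ[ℝ] Eu n)) *
            dens K (x : Eu n) ∂sphMeas n) +
        (n : ℝ) * ‖∫ x : Sph n, dens K (x : Eu n) • gradient (sfn K) (x : Eu n) ∂sphMeas n‖ ^ 2 /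
          (∫ x : Sph n, dens K (x : Eu n) ∂sphMeas n) := by
  have hfinrank : (Module.finrank ℝ (Eu n) : ℝ) - 1 = n := by simp
  exact hfinrank ▸ key_inequality_general hK.isC2PlusSupportFunction
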